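/- arXiv:1603.08715 — 3 statements merged into one kernel-verified Lean document; each statement's English description precedes it below -/
import Mathlib

section
/- Let n ≥ 2, k ≥ 1, d ≥ 1. The group RFA(ℤ^d,n,k) is residually finite and is not finitely generated. -/
open Function

/-- `ℤ^d`. -/
abbrev V (d : ℕ) : Type := Fin d → ℤ

/-- A head configuration is valid if it carries at most one head. -/
def headOk {d k : ℕ} (y : V d → Option (Fin k)) : Prop :=
  ∀ u v : V d, (y u).isSome → (y v).isSome → u = v

/-- The space `X_{n,k}`: a tape in `Σ^{ℤ^d}` together with at most one head
carrying a state in `Q = Fin k`. -/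
abbrev X (d n k : ℕ) : Type :=
  { c : (V d → Fin n) × (V d → Option (Fin k)) // headOk c.2 }

/-- `DefinedBy F F' f T` : `T` is the moving-head Turing machine defined by the
local rule `f`, reading the tape on the window `F`, writing on the window `F'`,
changing the state and moving the head. -/
def DefinedBy {d n k : ℕ} (F F' : Finset (V d))
    (f : (V d → Fin n) → Fin k → (V d → Fin n) × Fin k × V d)
    (T : X d n k → X d n k) : Prop :=
  -- `f` only depends on the restriction of the tape to `F`, and only the
  -- restriction of its tape output to `F'` matters:
  (∀ x x' q, (∀ v ∈ F, x v = x' v) →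
      (∀ v ∈ F', (f x q).1 v = (f x' q).1 v) ∧ (f x q).2 = (f x' q).2) ∧
  -- a configuration with no head is fixed:
  (∀ c : X d n k, (∀ v, c.val.2 v = none) → T c = c) ∧
  -- if the head is at `v` in state `q`, apply the local rule there:
  (∀ (c : X d n k) (v : V d) (q : Fin k), c.val.2 v = some q →
    (∀ t, (T c).val.1 t =
      if t - v ∈ F' then (f (fun u => c.val.1 (u + v)) q).1 (t - v) else c.val.1 t) ∧
    (∀ t, (T c).val.2 t =
      if t = v + (f (fun u => c.val.1 (u + v)) q).2.2
      then some (f (fun u => c.val.1 (u + v)) q).2.1 else none))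

/-- A moving-head `(d,n,k)`-Turing machine. -/
def IsTM {d n k : ℕ} (T : X d n k → X d n k) : Prop :=
  ∃ F F' f, DefinedBy F F' f T

/-- A reversible moving-head Turing machine: a Turing machine admitting a
Turing machine inverse. -/
def IsRTM {d n k : ℕ} (T : X d n k → X d n k) : Prop :=
  IsTM T ∧ ∃ S : X d n k → X d n k, IsTM S ∧ S ∘ T = id ∧ T ∘ S = id

/-- The set of reversible Turing machines, viewed as permutations of `X_{n,k}`. -/
def RTMset (d n k : ℕ) : Set (Equiv.Perm (X d n k)) :=
  {π | IsTM (⇑π) ∧ IsTM (⇑π.symm)}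

/-- The group `RTM(ℤ^d,n,k)` of reversible Turing machines (a subgroup of the
permutation group of `X_{n,k}`; the set of reversible Turing machines is closed
under composition and inversion, so it coincides with the subgroup it generates). -/
def RTMgrp (d n k : ℕ) : Subgroup (Equiv.Perm (X d n k)) :=
  Subgroup.closure (RTMset d n k)

/-- Local permutations: reversible Turing machines that never move the head. -/
def LPset (d n k : ℕ) : Set (Equiv.Perm (X d n k)) :=
  {π | π ∈ RTMset d n k ∧
    ∀ (c : X d n k) (v : V d), ((π c).val.2 v).isSome = (c.val.2 v).isSome}

/-- The group `LP(ℤ^d,n,k)` of local permutations. -/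
def LPgrp (d n k : ℕ) : Subgroup (Equiv.Perm (X d n k)) :=
  Subgroup.closure (LPset d n k)

/-- Reversible finite-state automata: reversible Turing machines that never
change the tape. -/
def RFAset (d n k : ℕ) : Set (Equiv.Perm (X d n k)) :=
  {π | π ∈ RTMset d n k ∧ ∀ c : X d n k, (π c).val.1 = c.val.1}

/-- The group `RFA(ℤ^d,n,k)` of reversible finite-state automata. -/
def RFAgrp (d n k : ℕ) : Subgroup (Equiv.Perm (X d n k)) :=
  Subgroup.closure (RFAset d n k)

/-- State-permutations: reversible machines that never move the head and never
change the tape, only permuting the state as a function of the tape. -/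
def SPset (d n k : ℕ) : Set (Equiv.Perm (X d n k)) :=
  {π | π ∈ RTMset d n k ∧ (∀ c : X d n k, (π c).val.1 = c.val.1) ∧
    ∀ (c : X d n k) (v : V d), ((π c).val.2 v).isSome = (c.val.2 v).isSome}

/-- The group `SP(ℤ^d,n,k)` of state-permutations. -/
def SPgrp (d n k : ℕ) : Subgroup (Equiv.Perm (X d n k)) :=
  Subgroup.closure (SPset d n k)

/-- The machines `T_u` that move the head by `u ∈ ℤ^d` without changing the
tape or the state. -/
def Shiftset (d n k : ℕ) : Set (Equiv.Perm (X d n k)) :=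
  {π | ∃ u : V d, ∀ c : X d n k,
    (π c).val.1 = c.val.1 ∧ ∀ t, (π c).val.2 t = c.val.2 (t - u)}

/-- The group `Shift(ℤ^d,n,k)`. -/
def Shiftgrp (d n k : ℕ) : Subgroup (Equiv.Perm (X d n k)) :=
  Subgroup.closure (Shiftset d n k)

/-- The group `OB(ℤ^d,n,k) = ⟨Shift(ℤ^d,n,k), LP(ℤ^d,n,k)⟩` of oblivious Turing
machines. -/
def OBgrp (d n k : ℕ) : Subgroup (Equiv.Perm (X d n k)) :=
  Subgroup.closure (Shiftset d n k ∪ LPset d n k)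

/-- The group `EL(ℤ^d,n,k) = ⟨RFA(ℤ^d,n,k), LP(ℤ^d,n,k)⟩` of elementary Turing
machines. -/
def ELgrp (d n k : ℕ) : Subgroup (Equiv.Perm (X d n k)) :=
  Subgroup.closure (RFAset d n k ∪ LPset d n k)

/-- A group is residually finite if every nontrivial element survives in some
homomorphism to a finite group. -/
def ResiduallyFinite (G : Type*) [Group G] : Prop :=
  ∀ g : G, g ≠ 1 → ∃ (H : Type) (_ : Group H) (_ : Finite H) (φ : G →* H), φ g ≠ 1

/-! A machine that never changes the tape still acts when the tape is `p`-periodic and the head is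
only located modulo `p`, so `RFA(ℤ^d,n,k)` acts on the finite sets `(ℤ/p)^d × Q`. A nontrivial
element moves some head while reading only finitely many cells, and these can be copied onto a
`p`-periodic tape for large `p`; hence residual finiteness.

For the failure of finite generation, take the sign of the action on the periodic tape with a single
non-blank cell per period. The element exchanging the cells `v` and `v + e` whenever `v` is
non-blank and followed by `p` blanks acts trivially if the period is `p`, and as a transposition if
the period is larger. So these signs give infinitely many homomorphisms to `ℤˣ`, whereas a finitely
generated group has only finitely many homomorphisms to a given finite group. -/

namespace RFA

section FiniteGeneration

theorem finite_monoidHom_of_fg (G H : Type*) [Monoid G] [Monoid.FG G] [Monoid H] [Finite H] :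
    Finite (G →* H) := by
  obtain ⟨S, hS⟩ := Monoid.fg_def.1 ‹Monoid.FG G›
  exact .of_injective (fun (f : G →* H) (s : S) ↦ f s) fun f g hfg ↦
    MonoidHom.eq_of_eqOn_denseM hS fun s hs ↦ congrFun hfg ⟨s, hs⟩

theorem not_monoidFG_of_separating_homs {G H : Type*} [Monoid G] [Monoid H] [Finite H]
    (φ : ℕ → G →* H) (g : ℕ → G) (hself : ∀ p, φ p (g p) = 1)
    (hlt : ∀ p r, p < r → φ r (g p) ≠ 1) : ¬ Monoid.FG G := by
  intro hG
  have hφ : Injective φ := .of_lt_imp_ne fun p r hpr heq ↦ hlt p r hpr (heq ▸ hself p)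
  have := finite_monoidHom_of_fg G H
  exact not_injective_infinite_finite φ hφ

end FiniteGeneration

section Reduction

open Filter

variable {d : ℕ}

/-- Coordinatewise reduction `ℤ^d → (ℤ/p)^d`. Tapes factoring through it are the `p`-periodic
ones. -/
def reduceMod (d p : ℕ) : V d →+ (Fin d → ZMod p) :=
  (Int.castAddHom (ZMod p)).compLeft (Fin d)

theorem eventually_intCast_zmod_ne_zero {z : ℤ} (hz : z ≠ 0) :
    ∀ᶠ p : ℕ in atTop, (z : ZMod p) ≠ 0 := by
  filter_upwards [eventually_gt_atTop z.natAbs] with p hp h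
  refine hz (Int.eq_zero_of_abs_lt_dvd ((ZMod.intCast_zmod_eq_zero_iff_dvd z p).1 h) ?_)
  rw [Int.abs_eq_natAbs]
  exact_mod_cast hp

theorem eventually_reduceMod_ne_zero {v : V d} (hv : v ≠ 0) :
    ∀ᶠ p : ℕ in atTop, reduceMod d p v ≠ 0 := by
  obtain ⟨i, hi⟩ := Function.ne_iff.1 hv
  filter_upwards [eventually_intCast_zmod_ne_zero hi] with p hp h
  exact hp (congrFun h i)

theorem eventually_injOn_reduceMod (S : Finset (V d)) :
    ∀ᶠ p : ℕ in atTop, Set.InjOn (reduceMod d p) S := by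
  have hpair : ∀ s ∈ S, ∀ t ∈ S, ∀ᶠ p : ℕ in atTop,
      reduceMod d p s = reduceMod d p t → s = t := by
    intro s _ t _
    by_cases hst : s = t
    · exact .of_forall fun _ _ ↦ hst
    · filter_upwards [eventually_reduceMod_ne_zero (sub_ne_zero.2 hst)] with p hp h
      exact absurd (by rw [map_sub, h, sub_self]) hp
  filter_upwards [(eventually_all_finset S).2 fun s hs ↦ (eventually_all_finset S).2 (hpair s hs)]
    with p hp s hs t ht using hp s hs t ht

end Reduction

section Configurations

variable {d n k : ℕ}

/-- The configuration with tape `x` and a head at `s.1` in state `s.2`. -/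
def headAt (x : V d → Fin n) (s : V d × Fin k) : X d n k :=
  ⟨(x, fun t ↦ if t = s.1 then some s.2 else none), fun u w hu hw ↦ by
    simp only [Option.isSome_ite] at hu hw
    rw [hu, hw]⟩

theorem headAt_injective (x : V d → Fin n) : Injective (headAt (k := k) x) := by
  intro s s' h
  have hhead : (headAt x s).val.2 s'.1 = some s'.2 := by rw [h]; exact if_pos rfl
  obtain ⟨hpos, hstate⟩ := Option.ite_none_right_eq_some.1 hhead
  exact Prod.ext hpos.symm (Option.some.inj hstate)

theorem head_eq_some_iff {c : X d n k} {s : V d × Fin k} :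
    c.val.2 s.1 = some s.2 ↔ c = headAt c.val.1 s := by
  refine ⟨fun h ↦ Subtype.ext (Prod.ext rfl (funext fun t ↦ ?_)), fun h ↦ ?_⟩
  · by_cases ht : t = s.1
    · simp only [headAt, ht, if_true, h]
    · have hnone : ¬ (c.val.2 t).isSome := fun hs ↦ ht (c.2 t s.1 hs (by rw [h]; rfl))
      simpa only [headAt, if_neg ht, Option.not_isSome_iff_eq_none] using hnone
  · rw [h]
    exact if_pos rfl

theorem headless_iff {c : X d n k} :
    (∀ v, c.val.2 v = none) ↔ ∀ s, c ≠ headAt c.val.1 s := by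
  simp only [ne_eq, ← head_eq_some_iff, Prod.forall, Option.eq_none_iff_forall_ne_some]

theorem headless_or_eq_headAt (c : X d n k) :
    (∀ v, c.val.2 v = none) ∨ ∃ s, c = headAt c.val.1 s := by
  rw [headless_iff, ← not_exists]
  exact (em _).symm

end Configurations

section MoveRules

/-- The tape `x` as seen from the cell `v`, that is, `σ_{-v} x`. -/
def view {A α : Type*} [Add A] (x : A → α) (v : A) : A → α := fun t ↦ x (t + v)

theorem view_zero {A α : Type*} [AddZeroClass A] (x : A → α) : view x 0 = x :=
  funext fun t ↦ congrArg x (add_zero t)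

theorem view_view {A α : Type*} [AddSemigroup A] (x : A → α) (v w : A) :
    view (view x v) w = view x (w + v) :=
  funext fun t ↦ congrArg x (add_assoc t w v)

theorem view_add_map {A B α H : Type*} [AddCommSemigroup A] [Add B] [FunLike H B A]
    [AddHomClass H B A] (ρ : H) (y : A → α) (a : A) (u : B) :
    view y (a + ρ u) ∘ ρ = view (view y a ∘ ρ) u := by
  funext t
  simp only [view, comp_apply, map_add, add_assoc, add_comm a]

/-- The rule of a finite-state automaton: given the tape seen from the head and the current state,
the displacement of the head and the new state. That only a finite window of the tape is read is
expressed separately, by `DependsOn`. -/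
abbrev MoveRule (d n k : ℕ) : Type := (V d → Fin n) → Fin k → V d × Fin k

variable {d n k : ℕ} {A : Type*} [AddCommGroup A]

/-- The rule that neither moves the head nor changes its state. -/
def MoveRule.id : MoveRule d n k := fun _ q ↦ (0, q)

/-- The rule that applies `m` and then `m'`. -/
def MoveRule.comp (m' m : MoveRule d n k) : MoveRule d n k := fun x q ↦
  ((m x q).1 + (m' (view x (m x q).1) (m x q).2).1, (m' (view x (m x q).1) (m x q).2).2)

/-- One application of the rule `m` to a head living on the image `A` of `ℤ^d` under `ρ`, with
tape `y`: the head sees the lift of `y` to `ℤ^d`. For `ρ = id` this is the motion on `ℤ^d`. -/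
def step (ρ : V d →+ A) (y : A → Fin n) (m : MoveRule d n k) (s : A × Fin k) : A × Fin k :=
  (s.1 + ρ (m (view y s.1 ∘ ρ) s.2).1, (m (view y s.1 ∘ ρ) s.2).2)

theorem step_id (ρ : V d →+ A) (y : A → Fin n) :
    step ρ y (MoveRule.id : MoveRule d n k) = id := by
  funext s
  simp only [step, MoveRule.id, map_zero, add_zero, id]

theorem step_comp (ρ : V d →+ A) (y : A → Fin n) (m' m : MoveRule d n k) :
    step ρ y (m'.comp m) = step ρ y m' ∘ step ρ y m := by
  funext s
  simp only [step, MoveRule.comp, comp_apply, view_add_map, map_add, add_assoc]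

theorem finite_range_of_dependsOn {ι β : Type*} {α : ι → Type*} [∀ i, Finite (α i)]
    {f : (∀ i, α i) → β} {F : Finset ι} (hf : DependsOn f F) : (Set.range f).Finite := by
  cases isEmpty_or_nonempty (∀ i, α i) with
  | inl _ => exact Set.finite_range f
  | inr hne =>
    have : Nonempty β := hne.map f
    obtain ⟨g, rfl⟩ := dependsOn_iff_exists_comp.1 hf
    exact (Set.finite_range g).subset (Set.range_comp_subset_range _ g)

theorem finite_displacements {m : MoveRule d n k} {F : Finset (V d)} (hm : DependsOn m F) :
    (⋃ q, Set.range fun x ↦ (m x q).1).Finite :=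
  Set.finite_iUnion fun _ ↦ finite_range_of_dependsOn (F := F) fun _ _ h ↦ by rw [hm h]

open scoped Pointwise in
theorem exists_dependsOn_comp {m' m : MoveRule d n k} {F' F : Finset (V d)}
    (hm' : DependsOn m' F') (hm : DependsOn m F) :
    ∃ E : Finset (V d), DependsOn (m'.comp m) E := by
  set D : Finset (V d) := (finite_displacements hm).toFinset with hD
  refine ⟨F ∪ (F' + D), fun x x' hx ↦ funext fun q ↦ ?_⟩
  have hfst : m x = m x' := hm fun t ht ↦ hx t (Finset.mem_union_left _ ht)
  have hu : (m x' q).1 ∈ D := by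
    rw [hD, Set.Finite.mem_toFinset]
    exact Set.mem_iUnion.2 ⟨q, x', rfl⟩
  have hsnd : m' (view x (m x' q).1) = m' (view x' (m x' q).1) := hm' fun t ht ↦
    hx _ (Finset.mem_union_right _ (Finset.add_mem_add ht hu))
  simp only [MoveRule.comp, hfst, hsnd]

end MoveRules

section Walks

variable {d n k : ℕ}

open Classical in
/-- The transformation of `X_{n,k}` that moves the head according to the rule `m`. -/
noncomputable def walk (m : MoveRule d n k) (c : X d n k) : X d n k :=
  if h : ∃ s, c = headAt c.val.1 s then headAt c.val.1 (step (.id _) c.val.1 m h.choose) else c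

theorem walk_headAt (m : MoveRule d n k) (x : V d → Fin n) (s : V d × Fin k) :
    walk m (headAt x s) = headAt x (step (.id _) x m s) := by
  have h : ∃ s', headAt x s = headAt (headAt x s).val.1 s' := ⟨s, rfl⟩
  have hs : h.choose = s := (headAt_injective x h.choose_spec).symm
  rw [walk, dif_pos h, hs]
  rfl

theorem walk_of_headless (m : MoveRule d n k) {c : X d n k} (hc : ∀ v, c.val.2 v = none) :
    walk m c = c :=
  dif_neg (not_exists.2 (headless_iff.1 hc))

theorem walk_tape (m : MoveRule d n k) (c : X d n k) : (walk m c).val.1 = c.val.1 := by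
  rcases headless_or_eq_headAt c with hc | ⟨s, hc⟩
  · rw [walk_of_headless m hc]
  · rw [hc, walk_headAt]
    rfl

theorem eq_walk_iff {m : MoveRule d n k} {T : X d n k → X d n k} :
    T = walk m ↔ (∀ c : X d n k, (∀ v, c.val.2 v = none) → T c = c) ∧
      ∀ x s, T (headAt x s) = headAt x (step (.id _) x m s) := by
  refine ⟨fun h ↦ h ▸ ⟨fun _ ↦ walk_of_headless m, walk_headAt m⟩, fun ⟨hnone, hhead⟩ ↦ ?_⟩
  funext c
  rcases headless_or_eq_headAt c with hc | ⟨s, hc⟩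
  · rw [hnone c hc, walk_of_headless m hc]
  · rw [hc, hhead, walk_headAt]

theorem walk_id : walk (MoveRule.id : MoveRule d n k) = id :=
  (eq_walk_iff.2 ⟨fun _ _ ↦ rfl, fun x s ↦ by rw [step_id]; rfl⟩).symm

theorem walk_comp (m' m : MoveRule d n k) : walk (m'.comp m) = walk m' ∘ walk m := by
  refine (eq_walk_iff.2 ⟨fun c hc ↦ ?_, fun x s ↦ ?_⟩).symm
  · rw [comp_apply, walk_of_headless m hc, walk_of_headless m' hc]
  · rw [comp_apply, walk_headAt, walk_headAt, step_comp, comp_apply]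

theorem walk_injective : Injective (walk : MoveRule d n k → X d n k → X d n k) := by
  intro m₁ m₂ h
  funext x q
  have hstep : ∀ m : MoveRule d n k, walk m (headAt x (0, q)) = headAt x (m x q) := fun m ↦ by
    rw [walk_headAt, step, view_zero, zero_add]
    rfl
  exact headAt_injective x (by rw [← hstep m₁, h, hstep m₂])

/-- A transformation of `X_{n,k}` that moves the head and updates its state by reading a finite
window of the tape around the head. -/
def IsAutomaton (T : X d n k → X d n k) : Prop :=
  ∃ (m : MoveRule d n k) (F : Finset (V d)), DependsOn m F ∧ T = walk m

theorem isAutomaton_id : IsAutomaton (id : X d n k → X d n k) :=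
  ⟨MoveRule.id, ∅, fun _ _ _ ↦ rfl, walk_id.symm⟩

theorem IsAutomaton.comp {T' T : X d n k → X d n k} (hT' : IsAutomaton T')
    (hT : IsAutomaton T) : IsAutomaton (T' ∘ T) := by
  obtain ⟨m', F', hm', rfl⟩ := hT'
  obtain ⟨m, F, hm, rfl⟩ := hT
  obtain ⟨E, hE⟩ := exists_dependsOn_comp hm' hm
  exact ⟨m'.comp m, E, hE, (walk_comp m' m).symm⟩

theorem isTM_walk {m : MoveRule d n k} {F : Finset (V d)} (hm : DependsOn m F) :
    IsTM (walk m) := by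
  refine ⟨F, ∅, fun x q ↦ (x, (m x q).2, (m x q).1), fun x x' q hx ↦ ?_,
    fun c ↦ walk_of_headless m, fun c v q hq ↦ ⟨fun t ↦ ?_, fun t ↦ ?_⟩⟩
  · exact ⟨fun v hv ↦ absurd hv (Finset.notMem_empty v), by simp only [hm hx]⟩
  · rw [walk_tape, if_neg (Finset.notMem_empty _)]
  · rw [(head_eq_some_iff (s := (v, q))).1 hq, walk_headAt]
    rfl

theorem isAutomaton_iff {T : X d n k → X d n k} :
    IsAutomaton T ↔ IsTM T ∧ ∀ c, (T c).val.1 = c.val.1 := by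
  constructor
  · rintro ⟨m, F, hm, rfl⟩
    exact ⟨isTM_walk hm, walk_tape m⟩
  · rintro ⟨⟨F, F', f, hlocal, hnone, hhead⟩, htape⟩
    refine ⟨fun x q ↦ ((f x q).2.2, (f x q).2.1), F, fun x x' hx ↦ funext fun q ↦ ?_,
      eq_walk_iff.2 ⟨hnone, fun x s ↦ ?_⟩⟩
    · simp only [(hlocal x x' q hx).2]
    · exact Subtype.ext (Prod.ext (htape _)
        (funext (hhead (headAt x s) s.1 s.2 (if_pos rfl)).2))

theorem mem_RFAset_iff {π : Equiv.Perm (X d n k)} :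
    π ∈ RFAset d n k ↔ IsAutomaton π ∧ IsAutomaton π.symm := by
  have htape : (∀ c, (π c).val.1 = c.val.1) → ∀ c, (π.symm c).val.1 = c.val.1 := fun h c ↦ by
    rw [← h (π.symm c), π.apply_symm_apply]
  rw [isAutomaton_iff, isAutomaton_iff]
  exact ⟨fun ⟨⟨hπ, hsymm⟩, h⟩ ↦ ⟨⟨hπ, h⟩, hsymm, htape h⟩,
    fun ⟨⟨hπ, h⟩, hsymm, _⟩ ↦ ⟨⟨hπ, hsymm⟩, h⟩⟩

theorem mem_RFAgrp_iff {π : Equiv.Perm (X d n k)} :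
    π ∈ RFAgrp d n k ↔ IsAutomaton π ∧ IsAutomaton π.symm := by
  refine ⟨fun hπ ↦ ?_, fun hπ ↦ Subgroup.subset_closure (mem_RFAset_iff.2 hπ)⟩
  induction hπ using Subgroup.closure_induction with
  | mem π hπ => exact mem_RFAset_iff.1 hπ
  | one => exact ⟨isAutomaton_id, isAutomaton_id⟩
  | mul π π' _ _ hπ hπ' => exact ⟨hπ.1.comp hπ'.1, hπ'.2.comp hπ.2⟩
  | inv π _ hπ => exact hπ.symm

end Walks

section GroupAction

variable {d n k : ℕ} {A : Type*} [AddCommGroup A]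

theorem exists_coe_eq_walk (g : RFAgrp d n k) :
    ∃ (m : MoveRule d n k) (F : Finset (V d)), DependsOn m F ∧ ⇑g.1 = walk m :=
  (mem_RFAgrp_iff.1 g.2).1

/-- The unique rule by which `g` moves the head. -/
noncomputable def moveRule (g : RFAgrp d n k) : MoveRule d n k := (exists_coe_eq_walk g).choose

theorem exists_dependsOn_moveRule (g : RFAgrp d n k) :
    ∃ F : Finset (V d), DependsOn (moveRule g) F :=
  (exists_coe_eq_walk g).choose_spec.imp fun _ ↦ And.left

theorem walk_moveRule (g : RFAgrp d n k) : walk (moveRule g) = g.1 :=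
  let ⟨_, _, hg⟩ := (exists_coe_eq_walk g).choose_spec
  hg.symm

theorem moveRule_eq {g : RFAgrp d n k} {m : MoveRule d n k} (h : ⇑g.1 = walk m) :
    moveRule g = m :=
  walk_injective (by rw [walk_moveRule, h])

theorem moveRule_one : moveRule (1 : RFAgrp d n k) = MoveRule.id := moveRule_eq walk_id.symm

theorem moveRule_mul (g h : RFAgrp d n k) :
    moveRule (g * h) = (moveRule g).comp (moveRule h) :=
  moveRule_eq (by rw [walk_comp, walk_moveRule, walk_moveRule]; rfl)

theorem moveRule_eq_id_iff {g : RFAgrp d n k} : moveRule g = MoveRule.id ↔ g = 1 := by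
  refine ⟨fun h ↦ Subtype.ext (Equiv.ext fun c ↦ ?_), fun h ↦ h ▸ moveRule_one⟩
  rw [← walk_moveRule, h, walk_id]
  rfl

/-- The action of `RFA(ℤ^d,n,k)` on the positions and states of a head living on the image `A` of
`ℤ^d` under `ρ`, with tape `y`. -/
noncomputable def quotientHom (ρ : V d →+ A) (y : A → Fin n) :
    RFAgrp d n k →* Equiv.Perm (A × Fin k) :=
  MonoidHom.toHomPerm
    { toFun := fun g ↦ (step ρ y (moveRule g) : Function.End (A × Fin k))
      map_one' := by rw [moveRule_one, step_id]; rfl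
      map_mul' := fun g h ↦ by rw [moveRule_mul, step_comp]; rfl }

theorem coe_quotientHom (ρ : V d →+ A) (y : A → Fin n) (g : RFAgrp d n k) :
    ⇑(quotientHom ρ y g) = step ρ y (moveRule g) := rfl

end GroupAction

section ResidualFiniteness

variable {d n k : ℕ}

theorem exists_moveRule_ne {g : RFAgrp d n k} (hg : g ≠ 1) : ∃ x q, moveRule g x q ≠ (0, q) := by
  by_contra! h
  exact hg (moveRule_eq_id_iff.1 (funext₂ h))

theorem exists_quotientHom_ne_one {g : RFAgrp d n k} (hg : g ≠ 1) :
    ∃ p ≠ 0, ∃ y, quotientHom (reduceMod d p) y g ≠ 1 := by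
  classical
  obtain ⟨x, q, hmove⟩ := exists_moveRule_ne hg
  obtain ⟨F, hF⟩ := exists_dependsOn_moveRule g
  set S : Finset (V d) := F ∪ {(moveRule g x q).1, 0} with hS
  obtain ⟨p, hp, hinj⟩ := ((Filter.eventually_ne_atTop 0).and (eventually_injOn_reduceMod S)).exists
  set y : (Fin d → ZMod p) → Fin n := x ∘ invFunOn (reduceMod d p) S with hy
  refine ⟨p, hp, y, fun hone ↦ hmove ?_⟩
  have hsees : moveRule g (view y 0 ∘ reduceMod d p) = moveRule g x := hF fun t ht ↦ by
    rw [view_zero, hy, comp_apply, comp_apply,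
      hinj.leftInvOn_invFunOn (Finset.mem_union_left _ ht)]
  have hfix : step (reduceMod d p) y (moveRule g) (0, q) = (0, q) := by
    rw [← coe_quotientHom, hone, Equiv.Perm.one_apply]
  simp only [step, hsees, zero_add, Prod.mk.injEq] at hfix
  exact Prod.ext (hinj (by simp [hS]) (by simp [hS]) (hfix.1.trans (map_zero _).symm)) hfix.2

theorem residuallyFinite_RFAgrp : ResiduallyFinite (RFAgrp d n k) := by
  intro g hg
  obtain ⟨p, hp, y, hy⟩ := exists_quotientHom_ne_one hg
  have : NeZero p := ⟨hp⟩
  exact ⟨_, inferInstance, inferInstance, quotientHom (reduceMod d p) y, hy⟩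

end ResidualFiniteness

section Swaps

variable {d n k : ℕ} {A : Type*} [AddCommGroup A]

theorem walk_involutive {m : MoveRule d n k} (hm : m.comp m = MoveRule.id) :
    Involutive (walk m) := fun c ↦ by
  rw [← comp_apply (f := walk m), ← walk_comp, hm, walk_id, id]

/-- The element of `RFA(ℤ^d,n,k)` given by a self-inverse rule. -/
noncomputable def ofInvolution (m : MoveRule d n k) {F : Finset (V d)} (hF : DependsOn m F)
    (hm : m.comp m = MoveRule.id) : RFAgrp d n k :=
  ⟨(walk_involutive hm).toPerm, mem_RFAgrp_iff.2 ⟨⟨m, F, hF, rfl⟩, m, F, hF, rfl⟩⟩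

theorem moveRule_ofInvolution {m : MoveRule d n k} {F : Finset (V d)} (hF : DependsOn m F)
    (hm : m.comp m = MoveRule.id) : moveRule (ofInvolution m hF hm) = m := moveRule_eq rfl

open Classical in
/-- The rule by which a head in state `q₀` is exchanged between the cells `v` and `v + e` whenever
the tape seen from `v` satisfies `P`. -/
noncomputable def swapRule (q₀ : Fin k) (e : V d) (P : (V d → Fin n) → Prop) : MoveRule d n k :=
  fun x q ↦ (if q = q₀ ∧ P x then e else if q = q₀ ∧ P (view x (-e)) then -e else 0, q)

theorem swapRule_comp_self (q₀ : Fin k) {e : V d} {P : (V d → Fin n) → Prop}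
    (hP : ∀ x, P x → ¬ P (view x (-e))) :
    (swapRule q₀ e P).comp (swapRule q₀ e P) = MoveRule.id := by
  funext x q
  have hback : view (view x e) (-e) = x := by rw [view_view, neg_add_cancel, view_zero]
  have hnot : P x → ¬ P (view x e) := fun hx he ↦ hP _ he (hback.symm ▸ hx)
  by_cases hq : q = q₀
  · by_cases hx : P x
    · simp [MoveRule.comp, swapRule, MoveRule.id, hq, hx, hnot hx, hback]
    · by_cases hx' : P (view x (-e))
      · simp [MoveRule.comp, swapRule, MoveRule.id, hq, hx, hx']
      · simp [MoveRule.comp, swapRule, MoveRule.id, hx, hx', view_zero]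
  · simp [MoveRule.comp, swapRule, MoveRule.id, hq]

open scoped Pointwise in
theorem dependsOn_swapRule (q₀ : Fin k) (e : V d) {P : (V d → Fin n) → Prop} {F : Finset (V d)}
    (hF : DependsOn P F) : DependsOn (swapRule q₀ e P) ↑(F ∪ (F + {-e})) := by
  intro (x : V d → Fin n) (x' : V d → Fin n) hx
  have hfwd : P x = P x' := hF fun t ht ↦ hx t (Finset.mem_union_left _ ht)
  have hbwd : P (view x (-e)) = P (view x' (-e)) := hF fun t ht ↦
    hx _ (Finset.mem_union_right _ (Finset.add_mem_add ht (Finset.mem_singleton_self _)))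
  funext q
  rw [swapRule, swapRule, hfwd, hbwd]

theorem step_swapRule_of_forall_not {ρ : V d →+ A} {y : A → Fin n} (q₀ : Fin k) (e : V d)
    {P : (V d → Fin n) → Prop} (hP : ∀ a, ¬ P (view y a ∘ ρ)) :
    step ρ y (swapRule q₀ e P) = id := by
  funext ⟨a, q⟩
  simp [step, swapRule, ← view_add_map, hP]

theorem step_swapRule_of_unique [DecidableEq A] {ρ : V d →+ A} {y : A → Fin n} (q₀ : Fin k)
    (e : V d) {P : (V d → Fin n) → Prop} {b : A} (hP : ∀ a, P (view y a ∘ ρ) ↔ a = b) :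
    step ρ y (swapRule q₀ e P) = Equiv.swap (b, q₀) (b + ρ e, q₀) := by
  funext ⟨a, q⟩
  simp only [step, swapRule, ← view_add_map, hP, map_neg, ← sub_eq_add_neg, sub_eq_iff_eq_add,
    Equiv.swap_apply_def, Prod.mk.injEq]
  split_ifs <;> simp_all

end Swaps

section Gaps

variable {d n k : ℕ} {A : Type*} [AddCommGroup A] {b : Fin n} {e : V d} {p : ℕ}

/-- The origin carries a symbol other than the blank `b`, and the cells `e, 2e, …, pe` are blank. -/
def HasGap (b : Fin n) (e : V d) (p : ℕ) (x : V d → Fin n) : Prop :=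
  x 0 ≠ b ∧ ∀ j : ℕ, 1 ≤ j → j ≤ p → x (j • e) = b

theorem dependsOn_hasGap (b : Fin n) (e : V d) (p : ℕ) :
    DependsOn (HasGap b e p) ↑((Finset.range (p + 1)).image (· • e)) := by
  intro (x : V d → Fin n) (x' : V d → Fin n) hx
  have hcell : ∀ j ≤ p, x (j • e) = x' (j • e) := fun j hj ↦
    hx _ (Finset.mem_image_of_mem _ (Finset.mem_range_succ_iff.2 hj))
  have horigin : x 0 = x' 0 := by
    simpa only [zero_nsmul] using hcell 0 p.zero_le
  simp +contextual only [HasGap, horigin, hcell]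

theorem HasGap.not_view_neg (hp : 1 ≤ p) {x : V d → Fin n} (hx : HasGap b e p x) :
    ¬ HasGap b e p (view x (-e)) := fun h ↦
  hx.1 (by simpa only [view, one_smul, add_neg_cancel] using h.2 1 le_rfl hp)

/-- The automaton exchanging, in state `q₀`, the cells `v` and `v + e` whenever `v` carries a
non-blank symbol followed by `p` blanks in direction `e`. -/
noncomputable def gapSwap (q₀ : Fin k) (b : Fin n) (e : V d) (hp : 1 ≤ p) : RFAgrp d n k :=
  ofInvolution (swapRule q₀ e (HasGap b e p)) (dependsOn_swapRule q₀ e (dependsOn_hasGap b e p))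
    (swapRule_comp_self q₀ fun _ ↦ HasGap.not_view_neg hp)

theorem not_hasGap_of_nsmul_eq_zero {ρ : V d →+ A} (hp : 1 ≤ p) (hρ : p • ρ e = 0) (y : A → Fin n)
    (a : A) : ¬ HasGap b e p (view y a ∘ ρ) := fun ⟨horigin, hblank⟩ ↦ horigin <| by
  simpa only [comp_apply, map_nsmul, hρ, map_zero] using hblank p hp le_rfl

theorem hasGap_update_iff [DecidableEq A] {ρ : V d →+ A} {c : Fin n} (hc : c ≠ b)
    (hρ : ∀ j : ℕ, 1 ≤ j → j ≤ p → j • ρ e ≠ 0) (a : A) :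
    HasGap b e p (view (update (const A b) 0 c) a ∘ ρ) ↔ a = 0 := by
  refine ⟨fun h ↦ ?_, fun h ↦ ⟨?_, fun j hj hjp ↦ ?_⟩⟩
  · by_contra ha
    exact h.1 (by simp [view, ha])
  · simp [view, h, hc]
  · rw [h, view_zero, comp_apply, map_nsmul, update_of_ne (hρ j hj hjp), const_apply]

theorem quotientHom_gapSwap_eq_one (q₀ : Fin k) {ρ : V d →+ A} (hp : 1 ≤ p) (hρ : p • ρ e = 0)
    (y : A → Fin n) : quotientHom ρ y (gapSwap q₀ b e hp) = 1 :=
  DFunLike.coe_injective <| by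
    rw [coe_quotientHom, gapSwap, moveRule_ofInvolution,
      step_swapRule_of_forall_not q₀ e (not_hasGap_of_nsmul_eq_zero hp hρ y), Equiv.Perm.coe_one]

theorem quotientHom_gapSwap_eq_swap [DecidableEq A] (q₀ : Fin k) {ρ : V d →+ A} {c : Fin n}
    (hc : c ≠ b) (hp : 1 ≤ p) (hρ : ∀ j : ℕ, 1 ≤ j → j ≤ p → j • ρ e ≠ 0) :
    quotientHom ρ (update (const A b) 0 c) (gapSwap q₀ b e hp) =
      Equiv.swap (0, q₀) (ρ e, q₀) :=
  DFunLike.coe_injective <| by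
    rw [coe_quotientHom, gapSwap, moveRule_ofInvolution,
      step_swapRule_of_unique q₀ e (hasGap_update_iff hc hρ), zero_add]

theorem nsmul_reduceMod_single_eq_zero_iff (i : Fin d) (r j : ℕ) :
    j • reduceMod d r (Pi.single i 1) = 0 ↔ r ∣ j := by
  have hcoord : j • reduceMod d r (Pi.single i 1) = Pi.single i (j : ZMod r) := by
    have hone : reduceMod d r (Pi.single i 1) = Pi.single i 1 := by
      funext t
      by_cases ht : t = i <;> simp [reduceMod, ht]
    rw [hone, ← Pi.single_smul, nsmul_one]
  rw [hcoord, Pi.single_eq_zero_iff, ZMod.natCast_eq_zero_iff]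

theorem not_fg_RFAgrp (i : Fin d) (q₀ : Fin k) {b c : Fin n} (hc : c ≠ b) :
    ¬ (RFAgrp d n k).FG := by
  classical
  rw [← Group.fg_iff_subgroup_fg, Group.fg_iff_monoid_fg]
  let e : V d := Pi.single i 1
  let parity (p : ℕ) : RFAgrp d n k →* ℤˣ :=
    (Equiv.Perm.sign (α := (Fin d → ZMod (p + 1)) × Fin k)).comp
      (quotientHom (reduceMod d (p + 1)) (update (const _ b) 0 c))
  refine not_monoidFG_of_separating_homs parity
    (fun p ↦ gapSwap q₀ b e (Nat.le_add_left 1 p)) (fun p ↦ ?_) (fun p r hpr ↦ ?_)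
  · have hperiod := (nsmul_reduceMod_single_eq_zero_iff i (p + 1) (p + 1)).2 dvd_rfl
    rw [MonoidHom.comp_apply, quotientHom_gapSwap_eq_one q₀ _ hperiod, map_one]
  · have hρ : ∀ j : ℕ, 1 ≤ j → j ≤ p + 1 → j • reduceMod d (r + 1) e ≠ 0 := fun j hj hjp h ↦
      Nat.not_dvd_of_pos_of_lt hj (by omega) ((nsmul_reduceMod_single_eq_zero_iff i _ j).1 h)
    have hne : ((0 : Fin d → ZMod (r + 1)), q₀) ≠ (reduceMod d (r + 1) e, q₀) := fun h ↦
      hρ 1 le_rfl (Nat.le_add_left 1 p) ((one_nsmul _).trans (congrArg Prod.fst h).symm)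
    rw [MonoidHom.comp_apply, quotientHom_gapSwap_eq_swap q₀ hc _ hρ, Equiv.Perm.sign_swap hne]
    decide

end Gaps

end RFA

/-- For `n ≥ 2`, the group `RFA(ℤ^d,n,k)` is residually finite and not finitely
generated. -/
theorem rfa_residuallyFinite_not_fg (n k d : ℕ) (hn : 2 ≤ n) (hk : 1 ≤ k) (hd : 1 ≤ d) :
    ResiduallyFinite (RFAgrp d n k) ∧ ¬ (RFAgrp d n k).FG := by
  have hsymbols : (⟨1, hn⟩ : Fin n) ≠ ⟨0, by omega⟩ := by simp
  exact ⟨RFA.residuallyFinite_RFAgrp, RFA.not_fg_RFAgrp ⟨0, hd⟩ ⟨0, hk⟩ hsymbols⟩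
end

section
/- For all d, n, k ≥ 1, the group RTM(ℤ^d,n,k) is locally embeddable in finite groups (LEF). -/
open Function

open scoped Pointwise in
/-- A group `G` is locally embeddable in finite groups (LEF) if for every finite
subset `M ⊆ G` there are a finite group `H` and a map `φ : G → H` which is injective
on `M ∪ M·M` and satisfies `φ(x)φ(y) = φ(xy)` for all `x, y ∈ M`. -/
def IsLEF (G : Type*) [Group G] : Prop :=
  ∀ M : Set G, M.Finite →
    ∃ (H : Type) (_ : Group H) (_ : Finite H) (φ : G → H),
      Set.InjOn φ (M ∪ M * M) ∧ ∀ x ∈ M, ∀ y ∈ M, φ (x * y) = φ x * φ y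

/-!
A machine is determined by its local rule, and composing machines corresponds to a multiplication
of local rules that makes sense over any group of positions. A rule over `ℤ^d` supported on a finite
window can be run on a finite quotient of `ℤ^d`; as soon as the quotient map is injective on a large
enough window, nothing wraps around, so products of the given rules are respected and distinct rules
stay distinct. Over a finite quotient the rules form a finite monoid, and this is enough: a map that
is multiplicative on a set containing `M` and `M⁻¹` sends `M` to units.
-/

open scoped Pointwise

theorem isLEF_of_forall_finite_monoid {G : Type*} [Group G]
    (h : ∀ F : Set G, F.Finite → ∃ (N : Type) (_ : Monoid N) (_ : Finite N) (φ : G → N),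
      φ 1 = 1 ∧ Set.InjOn φ F ∧ ∀ x ∈ F, ∀ y ∈ F, φ (x * y) = φ x * φ y) :
    IsLEF G := by
  intro M hM
  let F := M ∪ M * M ∪ M⁻¹
  have hF : F.Finite := (hM.union (hM.mul hM)).union hM.inv
  have subset_F : M ∪ M * M ⊆ F := Set.subset_union_left
  have mem_F {a : G} (ha : a ∈ M) : a ∈ F := subset_F (.inl ha)
  have inv_mem_F {a : G} (ha : a ∈ M) : a⁻¹ ∈ F := .inr (Set.inv_mem_inv.2 ha)
  obtain ⟨N, _, _, φ, φ_one, φ_inj, φ_mul⟩ := h F hF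
  have isUnit_of_mem {a : G} (ha : a ∈ M) : IsUnit (φ a) := by
    refine ⟨⟨φ a, φ a⁻¹, ?_, ?_⟩, rfl⟩
    · rw [← φ_mul a (mem_F ha) a⁻¹ (inv_mem_F ha), mul_inv_cancel, φ_one]
    · rw [← φ_mul a⁻¹ (inv_mem_F ha) a (mem_F ha), inv_mul_cancel, φ_one]
  have isUnit {a : G} : a ∈ M ∪ M * M → IsUnit (φ a) := by
    rintro (ha | ⟨b, hb, c, hc, rfl⟩)
    · exact isUnit_of_mem ha
    · exact φ_mul b (mem_F hb) c (mem_F hc) ▸ (isUnit_of_mem hb).mul (isUnit_of_mem hc)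
  choose! ψ hψ using fun a (ha : a ∈ M ∪ M * M) ↦ isUnit ha
  refine ⟨Nˣ, inferInstance, inferInstance, ψ, fun a ha b hb hab ↦ ?_, fun a ha b hb ↦ ?_⟩
  · exact φ_inj (subset_F ha) (subset_F hb) (by rw [← hψ a ha, ← hψ b hb, hab])
  · ext
    rw [Units.val_mul, hψ _ (.inr (Set.mul_mem_mul ha hb)), hψ a (.inl ha), hψ b (.inl hb),
      φ_mul a (mem_F ha) b (mem_F hb)]

theorem exists_finiteIndexNormalAddSubgroup_injOn {A : Type*} [AddGroup A]
    [AddGroup.ResiduallyFinite A] {E : Set A} (hE : E.Finite) :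
    ∃ N : FiniteIndexNormalAddSubgroup A,
      Set.InjOn (QuotientAddGroup.mk' N.toAddSubgroup) E := by
  let D : Set A := {a ∈ -E + E | a ≠ 0}
  have : Finite D := (hE.neg.add hE).subset (Set.sep_subset _ _)
  choose N hN using fun a : D ↦
    AddGroup.exists_finiteIndexNormalAddSubgroup_notMem (a : A) a.2.2
  have : (⨅ a, (N a).toAddSubgroup).FiniteIndex :=
    AddSubgroup.finiteIndex_iInf fun _ ↦ inferInstance
  have : (⨅ a, (N a).toAddSubgroup).Normal :=
    AddSubgroup.normal_iInf_normal fun _ ↦ inferInstance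
  refine ⟨.ofAddSubgroup (⨅ a, (N a).toAddSubgroup), fun s hs t ht hst ↦ ?_⟩
  by_contra hne
  have hD : -s + t ∈ D :=
    ⟨Set.add_mem_add (Set.neg_mem_neg.2 hs) ht, by rwa [ne_eq, neg_add_eq_zero]⟩
  exact hN ⟨_, hD⟩ (AddSubgroup.mem_iInf.1 (QuotientAddGroup.eq.1 hst) _)

instance residuallyFinite_int : AddGroup.ResiduallyFinite ℤ :=
  AddGroup.residuallyFinite_of_forall_exists_finite_addMonoidHom fun a ha ↦ by
    refine ⟨ZMod (a.natAbs + 1), inferInstance, inferInstance, Int.castAddHom _, fun h ↦ ha ?_⟩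
    have hdvd := (ZMod.intCast_zmod_eq_zero_iff_dvd a (a.natAbs + 1)).1 h
    exact Int.eq_zero_of_abs_lt_dvd hdvd (by push_cast; grind)

instance residuallyFinite_pi {ι : Type*} {A : ι → Type*} [∀ i, AddGroup (A i)]
    [∀ i, AddGroup.ResiduallyFinite (A i)] : AddGroup.ResiduallyFinite (∀ i, A i) := by
  rw [AddGroup.residuallyFinite_iff_forall_finiteIndexNormalAddSubgroup]
  intro a ha
  ext i
  exact AddGroup.residuallyFinite_iff_forall_finiteIndexNormalAddSubgroup.1 inferInstance _
    fun N ↦ ha (N.comap (Pi.evalAddMonoidHom A i))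

theorem finite_range_uncurry_of_eqOn {A S Q γ : Type*} [Finite S] [Finite Q] {F : Set A}
    (hF : F.Finite) {e : (A → S) → Q → γ}
    (he : ∀ x x' q, Set.EqOn x x' F → e x q = e x' q) : (Set.range (uncurry e)).Finite := by
  have := hF.to_subtype
  cases isEmpty_or_nonempty γ
  · exact Set.toFinite _
  let restrict : (A → S) × Q → (F → S) × Q := Prod.map F.domRestrict id
  have factors : (uncurry e).FactorsThrough restrict := by
    rintro ⟨x, q⟩ ⟨x', q'⟩ h
    obtain ⟨hx, rfl⟩ := Prod.mk.inj h
    exact he x x' q (Set.domRestrict_eq_domRestrict_iff.1 hx)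
  obtain ⟨e', he'⟩ := (factorsThrough_iff _).1 factors
  exact he' ▸ (Set.finite_range e').subset (Set.range_comp_subset_range restrict e')

/-- A local rule over a group `A` of positions, with alphabet `S` and state set `Q`: for a head in
state `q` sitting at the origin of the tape `x`, it prescribes the new tape, the new state, and the
position to which the head moves. The new tape is given in full, not only on a window, which makes
composition of machines a monoid structure on local rules. -/
@[ext]
structure LocalRule (A S Q : Type*) where
  write : (A → S) → Q → A → S
  next : (A → S) → Q → Q
  move : (A → S) → Q → A

namespace LocalRule

variable {A B S Q : Type*}

instance [Finite A] [Finite S] [Finite Q] : Finite (LocalRule A S Q) :=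
  .of_injective (fun g ↦ (g.write, g.next, g.move)) fun g h hgh ↦ by
    simpa [LocalRule.ext_iff] using hgh

/-- The rule `g` reads and modifies the tape, and moves the head, only within the window `W`. -/
structure SupportedOn (g : LocalRule A S Q) (W : Set A) : Prop where
  eqOn_write ⦃x x' : A → S⦄ (q : Q) : Set.EqOn x x' W → Set.EqOn (g.write x q) (g.write x' q) W
  next_eq ⦃x x' : A → S⦄ (q : Q) : Set.EqOn x x' W → g.next x q = g.next x' q
  move_eq ⦃x x' : A → S⦄ (q : Q) : Set.EqOn x x' W → g.move x q = g.move x' q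
  write_eq (x : A → S) (q : Q) ⦃t : A⦄ : t ∉ W → g.write x q t = x t
  move_mem (x : A → S) (q : Q) : g.move x q ∈ W

theorem SupportedOn.mono {g : LocalRule A S Q} {W E : Set A} (hg : g.SupportedOn W)
    (hWE : W ⊆ E) : g.SupportedOn E where
  eqOn_write x x' q hx t ht := by
    by_cases htW : t ∈ W
    · exact hg.eqOn_write q (hx.mono hWE) htW
    · rw [hg.write_eq x q htW, hg.write_eq x' q htW, hx ht]
  next_eq _ _ q hx := hg.next_eq q (hx.mono hWE)
  move_eq _ _ q hx := hg.move_eq q (hx.mono hWE)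
  write_eq x q _ ht := hg.write_eq x q fun htW ↦ ht (hWE htW)
  move_mem x q := hWE (hg.move_mem x q)

variable [AddGroup A] [AddGroup B]

/-- The tape that the head sees after applying `g`, centred at the new position of the head. -/
def view (g : LocalRule A S Q) (x : A → S) (q : Q) : A → S :=
  fun t ↦ g.write x q (g.move x q + t)

instance : One (LocalRule A S Q) := ⟨⟨fun x _ ↦ x, fun _ q ↦ q, fun _ _ ↦ 0⟩⟩

instance : Mul (LocalRule A S Q) where
  mul g h :=
    { write x q t := g.write (h.view x q) (h.next x q) (-h.move x q + t)
      next x q := g.next (h.view x q) (h.next x q)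
      move x q := h.move x q + g.move (h.view x q) (h.next x q) }

section

variable (g h : LocalRule A S Q) (x : A → S) (q : Q) (t : A)

@[simp] theorem one_write : (1 : LocalRule A S Q).write x q = x := rfl

@[simp] theorem one_next : (1 : LocalRule A S Q).next x q = q := rfl

@[simp] theorem one_move : (1 : LocalRule A S Q).move x q = 0 := rfl

@[simp] theorem mul_write :
    (g * h).write x q t = g.write (h.view x q) (h.next x q) (-h.move x q + t) := rfl

@[simp] theorem mul_next : (g * h).next x q = g.next (h.view x q) (h.next x q) := rfl

@[simp] theorem mul_move :
    (g * h).move x q = h.move x q + g.move (h.view x q) (h.next x q) := rfl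

@[simp] theorem one_view : (1 : LocalRule A S Q).view x q = x := by
  ext t
  simp [view]

@[simp] theorem mul_view : (g * h).view x q = g.view (h.view x q) (h.next x q) := by
  ext t
  simp [view, add_assoc]

end

instance : Monoid (LocalRule A S Q) where
  one_mul g := by ext <;> simp [view]
  mul_one g := by ext <;> simp
  mul_assoc g h k := by ext <;> simp [add_assoc]

namespace SupportedOn

variable {g h : LocalRule A S Q} {W : Set A}

theorem one : (1 : LocalRule A S Q).SupportedOn {0} where
  eqOn_write _ _ _ hx := hx
  next_eq _ _ _ _ := rfl
  move_eq _ _ _ _ := rfl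
  write_eq _ _ _ _ := rfl
  move_mem _ _ := rfl

theorem eqOn_view (hh : h.SupportedOn W) {x x' : A → S} (q : Q)
    (hx : Set.EqOn x x' (W ∪ (W + W))) : Set.EqOn (h.view x q) (h.view x' q) W := by
  intro s hs
  simp only [view, ← hh.move_eq q (hx.mono Set.subset_union_left)]
  exact (hh.mono Set.subset_union_left).eqOn_write q hx
    (.inr (Set.add_mem_add (hh.move_mem x q) hs))

theorem mul (hg : g.SupportedOn W) (hh : h.SupportedOn W) :
    (g * h).SupportedOn (W ∪ (W + W)) where
  eqOn_write x x' q hx t ht := by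
    have hxW := hx.mono Set.subset_union_left
    rw [mul_write, mul_write, ← hh.next_eq q hxW, ← hh.move_eq q hxW]
    by_cases hs : -h.move x q + t ∈ W
    · exact hg.eqOn_write _ (hh.eqOn_view q hx) hs
    · rw [hg.write_eq _ _ hs, hg.write_eq _ _ hs, view, view, ← hh.move_eq q hxW,
        add_neg_cancel_left]
      exact (hh.mono Set.subset_union_left).eqOn_write q hx ht
  next_eq x x' q hx := by
    rw [mul_next, mul_next, ← hh.next_eq q (hx.mono Set.subset_union_left)]
    exact hg.next_eq _ (hh.eqOn_view q hx)
  move_eq x x' q hx := by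
    have hxW := hx.mono Set.subset_union_left
    rw [mul_move, mul_move, ← hh.next_eq q hxW, ← hh.move_eq q hxW,
      hg.move_eq _ (hh.eqOn_view q hx)]
  write_eq x q t ht := by
    have hs : -h.move x q + t ∉ W := fun hs ↦
      ht (.inr ⟨_, hh.move_mem x q, _, hs, add_neg_cancel_left _ _⟩)
    rw [mul_write, hg.write_eq _ _ hs, view, add_neg_cancel_left,
      hh.write_eq _ _ fun htW ↦ ht (.inl htW)]
  move_mem x q := .inr (Set.add_mem_add (hh.move_mem x q) (hg.move_mem _ _))

end SupportedOn

open Classical in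
/-- The rule over `B` induced by a rule over `A` along a homomorphism `p : A → B`: it runs `g` on
the pulled back tape `x ∘ p` and copies the cells that `g` changed. If `p` is injective on a window
supporting `g`, at most one cell over each `w : B` is changed, so the choice is immaterial. -/
noncomputable def map (p : A →+ B) (g : LocalRule A S Q) : LocalRule B S Q where
  write x q w :=
    if h : ∃ t, p t = w ∧ g.write (x ∘ p) q t ≠ x w then g.write (x ∘ p) q h.choose else x w
  next x q := g.next (x ∘ p) q
  move x q := p (g.move (x ∘ p) q)

section map

variable {p : A →+ B} {g h : LocalRule A S Q} {W : Set A} (x : B → S) (q : Q)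

@[simp] theorem map_next : (g.map p).next x q = g.next (x ∘ p) q := rfl

@[simp] theorem map_move : (g.map p).move x q = p (g.move (x ∘ p) q) := rfl

theorem SupportedOn.map_write (hg : g.SupportedOn W) (hp : Set.InjOn p W) {t : A} (ht : t ∈ W) :
    (g.map p).write x q (p t) = g.write (x ∘ p) q t := by
  by_cases h : ∃ s, p s = p t ∧ g.write (x ∘ p) q s ≠ x (p t)
  · obtain ⟨hpt, hne⟩ := h.choose_spec
    have hW : h.choose ∈ W := by
      by_contra hW
      exact hne (by rw [hg.write_eq _ _ hW, comp_apply, hpt])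
    simp only [map, dif_pos h, hp hW ht hpt]
  · simp only [map, dif_neg h]
    by_contra hne
    exact h ⟨t, rfl, Ne.symm hne⟩

theorem SupportedOn.map_write_of_notMem (hg : g.SupportedOn W) {w : B} (hw : w ∉ p '' W) :
    (g.map p).write x q w = x w := by
  refine dif_neg ?_
  rintro ⟨t, rfl, hne⟩
  exact hne (hg.write_eq _ _ fun ht ↦ hw ⟨t, ht, rfl⟩)

theorem map_one : (1 : LocalRule A S Q).map p = 1 := by
  ext x q w
  · refine dif_neg ?_
    rintro ⟨t, rfl, hne⟩
    exact hne rfl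
  · rfl
  · simp

theorem SupportedOn.eqOn_map_view (hh : h.SupportedOn W) (hp : Set.InjOn p (W ∪ (W + W))) :
    Set.EqOn (h.view (x ∘ p) q) ((h.map p).view x q ∘ p) W := by
  intro s hs
  rw [comp_apply, view, view, map_move, ← p.map_add]
  exact ((hh.mono Set.subset_union_left).map_write x q hp
    (.inr (Set.add_mem_add (hh.move_mem _ _) hs))).symm

theorem SupportedOn.map_mul_write (hg : g.SupportedOn W) (hh : h.SupportedOn W)
    (hp : Set.InjOn p (W ∪ (W + W))) (w : B) :
    ((g * h).map p).write x q w = (g.map p * h.map p).write x q w := by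
  set u := h.move (x ∘ p) q
  have hu : u ∈ W := hh.move_mem _ _
  have hhE := hh.mono (E := W ∪ (W + W)) Set.subset_union_left
  have view_of_notMem : -p u + w ∉ p '' W →
      (g.map p * h.map p).write x q w = (h.map p).write x q w := fun hw ↦ by
    rw [mul_write, map_move, hg.map_write_of_notMem _ _ hw, view, map_move, add_neg_cancel_left]
  by_cases hw : w ∈ p '' (W ∪ (W + W))
  · obtain ⟨t, ht, rfl⟩ := hw
    rw [(hg.mul hh).map_write x q hp ht, mul_write]
    by_cases hs : -u + t ∈ W
    · rw [mul_write, map_move, ← p.map_neg, ← p.map_add,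
        hg.map_write _ _ (hp.mono Set.subset_union_left) hs]
      exact hg.eqOn_write _ (hh.eqOn_map_view x q hp) hs
    · have hps : -p u + p t ∉ p '' W := by
        rintro ⟨s, hs', hst⟩
        have hE : u + s ∈ W ∪ (W + W) := .inr (Set.add_mem_add hu hs')
        have : u + s = t := hp hE ht (by rw [p.map_add, hst, add_neg_cancel_left])
        exact hs (by rwa [← this, neg_add_cancel_left])
      rw [view_of_notMem hps, hhE.map_write x q hp ht, hg.write_eq _ _ hs, view,
        add_neg_cancel_left]
  · have hps : -p u + w ∉ p '' W := by
      rintro ⟨s, hs, hsw⟩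
      exact hw ⟨u + s, .inr (Set.add_mem_add hu hs), by rw [p.map_add, hsw, add_neg_cancel_left]⟩
    rw [view_of_notMem hps, (hg.mul hh).map_write_of_notMem x q hw,
      hhE.map_write_of_notMem x q hw]

theorem SupportedOn.map_mul (hg : g.SupportedOn W) (hh : h.SupportedOn W)
    (hp : Set.InjOn p (W ∪ (W + W))) : (g * h).map p = g.map p * h.map p := by
  ext x q w
  · exact hg.map_mul_write x q hh hp w
  · exact hg.next_eq _ (hh.eqOn_map_view x q hp)
  · rw [map_move, mul_move, mul_move, map_move, map_move, p.map_add]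
    congr 2
    exact hg.move_eq _ (hh.eqOn_map_view x q hp)

theorem SupportedOn.eq_of_map_eq (hg : g.SupportedOn W) (hh : h.SupportedOn W)
    (hp : Set.InjOn p W) (hgh : g.map p = h.map p) : g = h := by
  have pullback (x : A → S) : Set.EqOn (x ∘ invFunOn p W ∘ p) x W := fun t ht ↦
    congrArg x (hp.leftInvOn_invFunOn ht)
  ext x q t
  · by_cases ht : t ∈ W
    · rw [← hg.eqOn_write q (pullback x) ht, ← hh.eqOn_write q (pullback x) ht, ← comp_assoc,
        ← hg.map_write _ q hp ht, ← hh.map_write _ q hp ht, hgh]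
    · rw [hg.write_eq x q ht, hh.write_eq x q ht]
  · rw [← hg.next_eq q (pullback x), ← hh.next_eq q (pullback x), ← comp_assoc, ← map_next,
      ← map_next, hgh]
  · refine hp (hg.move_mem x q) (hh.move_mem x q) ?_
    rw [← hg.move_eq q (pullback x), ← hh.move_eq q (pullback x), ← comp_assoc, ← map_move,
      ← map_move, hgh]

end map

theorem isLEF_of_injective {A S Q : Type} [AddGroup A] [AddGroup.ResiduallyFinite A]
    [Finite S] [Finite Q] {G : Type*} [Group G] (ρ : G →* LocalRule A S Q) (hρ : Injective ρ)
    (hsupp : ∀ a, ∃ W : Set A, W.Finite ∧ (ρ a).SupportedOn W) : IsLEF G := by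
  refine isLEF_of_forall_finite_monoid fun F hF ↦ ?_
  choose W hW hρW using hsupp
  let E := ⋃ a ∈ F, W a
  have hE : E.Finite := hF.biUnion fun a _ ↦ hW a
  have hρE {a : G} (ha : a ∈ F) : (ρ a).SupportedOn E :=
    (hρW a).mono (Set.subset_biUnion_of_mem ha)
  obtain ⟨N, hN⟩ := exists_finiteIndexNormalAddSubgroup_injOn (hE.union (hE.add hE))
  let p := QuotientAddGroup.mk' N.toAddSubgroup
  refine ⟨LocalRule (A ⧸ N.toAddSubgroup) S Q, inferInstance, inferInstance,
    fun a ↦ (ρ a).map p, ?_, fun a ha b hb hab ↦ ?_, fun a ha b hb ↦ ?_⟩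
  · exact (congrArg (map p) ρ.map_one).trans map_one
  · exact hρ ((hρE ha).eq_of_map_eq (hρE hb) (hN.mono Set.subset_union_left) hab)
  · exact (congrArg (map p) (ρ.map_mul a b)).trans ((hρE ha).map_mul (hρE hb) hN)

end LocalRule

section Machine

variable {d n k : ℕ}

/-- The configuration with tape `x` whose head is at position `v` in state `q`. -/
def headed (x : V d → Fin n) (v : V d) (q : Fin k) : X d n k :=
  ⟨(x, fun t ↦ if t = v then some q else none), fun s t hs ht ↦ by
    simp only [Option.isSome_ite] at hs ht
    rw [hs, ht]⟩

theorem headed_inj {x x' : V d → Fin n} {v v' : V d} {q q' : Fin k} :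
    headed x v q = headed x' v' q' ↔ x = x' ∧ v = v' ∧ q = q' := by
  refine ⟨fun h ↦ ?_, by rintro ⟨rfl, rfl, rfl⟩; rfl⟩
  have hhead : (if v = v' then some q' else none) = some q := by
    simpa [headed] using (congrFun (congrArg (fun c ↦ c.val.2) h) v).symm
  rw [Option.ite_none_right_eq_some, Option.some_inj] at hhead
  exact ⟨congrArg (fun c ↦ c.val.1) h, hhead.1, hhead.2.symm⟩

theorem eq_headed_iff {c : X d n k} {x : V d → Fin n} {v : V d} {q : Fin k} :
    c = headed x v q ↔ c.val.1 = x ∧ c.val.2 v = some q := by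
  refine ⟨by rintro rfl; simp [headed], fun ⟨hx, hq⟩ ↦ Subtype.ext (Prod.ext hx ?_)⟩
  funext t
  by_cases ht : t = v
  · simp [headed, ht, hq]
  · have : ¬ (c.val.2 t).isSome := fun h ↦ ht (c.2 t v h (by simp [hq]))
    simpa [headed, ht] using this

theorem headless_or_eq_headed (c : X d n k) :
    (∀ v, c.val.2 v = none) ∨ ∃ x v q, c = headed x v q := by
  by_cases h : ∃ v q, c.val.2 v = some q
  · obtain ⟨v, q, hq⟩ := h
    exact .inr ⟨_, v, q, eq_headed_iff.2 ⟨rfl, hq⟩⟩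
  · push Not at h
    exact .inl fun v ↦ Option.eq_none_iff_forall_ne_some.2 (h v)

/-- `g.Implements T`: the map `T` fixes the configurations without a head and acts on the others by
applying the local rule `g` at the head. Unlike `DefinedBy`, it determines `g` from `T`. -/
structure LocalRule.Implements (g : LocalRule (V d) (Fin n) (Fin k)) (T : X d n k → X d n k) :
    Prop where
  apply_headless (c : X d n k) : (∀ v, c.val.2 v = none) → T c = c
  apply_headed (x : V d → Fin n) (v : V d) (q : Fin k) :
    T (headed x v q) = headed (fun t ↦ g.write (fun s ↦ x (v + s)) q (-v + t))
      (v + g.move (fun s ↦ x (v + s)) q) (g.next (fun s ↦ x (v + s)) q)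

namespace LocalRule.Implements

variable {g h : LocalRule (V d) (Fin n) (Fin k)} {T U : X d n k → X d n k}

theorem one : (1 : LocalRule (V d) (Fin n) (Fin k)).Implements id where
  apply_headless _ _ := rfl
  apply_headed x v q := by simp

theorem mul (hg : g.Implements T) (hh : h.Implements U) : (g * h).Implements (T ∘ U) where
  apply_headless c hc := by rw [comp_apply, hh.apply_headless c hc, hg.apply_headless c hc]
  apply_headed x v q := by
    simp only [comp_apply, hh.apply_headed, hg.apply_headed, mul_write, mul_move, mul_next,
      neg_add_rev, add_assoc, neg_add_cancel_left]
    rfl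

theorem rule_unique (hg : g.Implements T) (hh : h.Implements T) : g = h := by
  have key (x : V d → Fin n) (q : Fin k) :
      g.write x q = h.write x q ∧ g.move x q = h.move x q ∧ g.next x q = h.next x q := by
    simpa [headed_inj] using (hg.apply_headed x 0 q).symm.trans (hh.apply_headed x 0 q)
  ext x q : 3
  exacts [(key x q).1, (key x q).2.2, (key x q).2.1]

theorem machine_unique (hT : g.Implements T) (hU : g.Implements U) : T = U := by
  funext c
  obtain hc | ⟨x, v, q, rfl⟩ := headless_or_eq_headed c
  · rw [hT.apply_headless c hc, hU.apply_headless c hc]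
  · rw [hT.apply_headed, hU.apply_headed]

end LocalRule.Implements

/-- `T` is implemented by a local rule supported on a finite window. -/
def IsFinitelyImplemented (T : X d n k → X d n k) : Prop :=
  ∃ g : LocalRule (V d) (Fin n) (Fin k), g.Implements T ∧ ∃ W, W.Finite ∧ g.SupportedOn W

theorem IsFinitelyImplemented.id : IsFinitelyImplemented (id : X d n k → X d n k) :=
  ⟨1, .one, {0}, Set.finite_singleton 0, .one⟩

theorem IsFinitelyImplemented.comp {T U : X d n k → X d n k} (hT : IsFinitelyImplemented T)
    (hU : IsFinitelyImplemented U) : IsFinitelyImplemented (T ∘ U) := by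
  obtain ⟨g, hg, W, hW, hgW⟩ := hT
  obtain ⟨h, hh, E, hE, hhE⟩ := hU
  have hWE := hW.union hE
  exact ⟨g * h, hg.mul hh, _, hWE.union (hWE.add hWE),
    (hgW.mono Set.subset_union_left).mul (hhE.mono Set.subset_union_right)⟩

theorem IsTM.isFinitelyImplemented {T : X d n k → X d n k} (hT : IsTM T) :
    IsFinitelyImplemented T := by
  classical
  obtain ⟨F, F', f, hf, hheadless, hhead⟩ := hT
  let g : LocalRule (V d) (Fin n) (Fin k) :=
    { write x q t := if t ∈ F' then (f x q).1 t else x t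
      next x q := (f x q).2.1
      move x q := (f x q).2.2 }
  let moves := Set.range (uncurry g.move)
  have hmoves : moves.Finite := finite_range_uncurry_of_eqOn F.finite_toSet fun x x' q hx ↦
    congrArg Prod.snd (hf x x' q hx).2
  have hF {t : V d} (ht : t ∈ F) : t ∈ (F ∪ F' ∪ moves : Set (V d)) := .inl (.inl ht)
  refine ⟨g, ⟨hheadless, fun x v q ↦ ?_⟩, F ∪ F' ∪ moves,
    (F.finite_toSet.union F'.finite_toSet).union hmoves, ?_⟩
  · obtain ⟨htape, hpos⟩ := hhead (headed x v q) v q (by simp [headed])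
    refine Subtype.ext (Prod.ext (funext fun t ↦ ?_) (funext fun t ↦ ?_))
    · rw [htape]
      simp [headed, g, add_comm, sub_eq_add_neg]
    · rw [hpos]
      simp [headed, g, add_comm]
  · constructor
    · intro x x' q hx t ht
      obtain ⟨hwrite, -⟩ := hf x x' q fun v hv ↦ hx (hF hv)
      simp only [g]
      split_ifs with htF'
      exacts [hwrite t htF', hx ht]
    · exact fun x x' q hx ↦ congrArg Prod.fst (hf x x' q fun v hv ↦ hx (hF hv)).2
    · exact fun x x' q hx ↦ congrArg Prod.snd (hf x x' q fun v hv ↦ hx (hF hv)).2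
    · exact fun x q t ht ↦ if_neg fun htF' ↦ ht (.inl (.inr htF'))
    · exact fun x q ↦ .inr ⟨(x, q), rfl⟩

theorem isFinitelyImplemented_of_mem_RTMgrp {π : Equiv.Perm (X d n k)} (hπ : π ∈ RTMgrp d n k) :
    IsFinitelyImplemented π := by
  induction hπ using Subgroup.closure_induction'' with
  | mem π hπ => exact hπ.1.isFinitelyImplemented
  | inv_mem π hπ => exact hπ.2.isFinitelyImplemented
  | one => exact .id
  | mul π τ _ _ hπ hτ => exact hπ.comp hτ

theorem exists_monoidHom_implements (d n k : ℕ) :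
    ∃ ρ : RTMgrp d n k →* LocalRule (V d) (Fin n) (Fin k), ∀ π : RTMgrp d n k,
      (ρ π).Implements (π : Equiv.Perm (X d n k)) ∧ ∃ W, W.Finite ∧ (ρ π).SupportedOn W := by
  choose ρ hρ using fun π : RTMgrp d n k ↦ isFinitelyImplemented_of_mem_RTMgrp π.2
  exact ⟨⟨⟨ρ, (hρ 1).1.rule_unique .one⟩,
    fun π τ ↦ (hρ (π * τ)).1.rule_unique ((hρ π).1.mul (hρ τ).1)⟩, hρ⟩

end Machine

/-- The group `RTM(ℤ^d,n,k)` is LEF (hence sofic) for all `n, k, d`. -/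
theorem rtm_lef (d n k : ℕ) (hd : 1 ≤ d) (hn : 1 ≤ n) (hk : 1 ≤ k) :
    IsLEF (RTMgrp d n k) := by
  obtain ⟨ρ, hρ⟩ := exists_monoidHom_implements d n k
  refine LocalRule.isLEF_of_injective ρ (fun π τ hπτ ↦ ?_) fun π ↦ (hρ π).2
  have hτ := hπτ ▸ (hρ τ).1
  exact Subtype.ext (DFunLike.coe_injective ((hρ π).1.machine_unique hτ))
end

section
/- Let n, k ≥ 1. The torsion problem of RFA(ℤ,n,k) is decidable: there is an algorithm which, given a local rule f defining a reversible finite-state machine T_f ∈ RFA(ℤ,n,k), decides whether T_f has finite order (i.e. whether T_f^m = id for some m ≥ 1). -/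
open Function

/-- A head configuration on `ℤ` is valid if it carries at most one head. -/
def headOk1 {k : ℕ} (y : ℤ → Option (Fin k)) : Prop :=
  ∀ u v : ℤ, (y u).isSome → (y v).isSome → u = v

/-- The space `X_{n,k}` in dimension one: a tape in `Σ^ℤ` together with at most
one head carrying a state in `Q = Fin k`. -/
abbrev X1 (n k : ℕ) : Type :=
  { c : (ℤ → Fin n) × (ℤ → Option (Fin k)) // headOk1 c.2 }

/-- `DefinedBy1 F F' f T` : `T` is the moving-head Turing machine on `ℤ` defined by
the local rule `f`, reading the tape on the window `F`, writing on the window `F'`,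
changing the state and moving the head. -/
def DefinedBy1 {n k : ℕ} (F F' : Finset ℤ)
    (f : (ℤ → Fin n) → Fin k → (ℤ → Fin n) × Fin k × ℤ)
    (T : X1 n k → X1 n k) : Prop :=
  -- `f` only depends on the restriction of the tape to `F`, and only the
  -- restriction of its tape output to `F'` matters:
  (∀ x x' q, (∀ v ∈ F, x v = x' v) →
      (∀ v ∈ F', (f x q).1 v = (f x' q).1 v) ∧ (f x q).2 = (f x' q).2) ∧
  -- a configuration with no head is fixed:
  (∀ c : X1 n k, (∀ v, c.val.2 v = none) → T c = c) ∧
  -- if the head is at `v` in state `q`, apply the local rule there: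
  (∀ (c : X1 n k) (v : ℤ) (q : Fin k), c.val.2 v = some q →
    (∀ t, (T c).val.1 t =
      if t - v ∈ F' then (f (fun u => c.val.1 (u + v)) q).1 (t - v) else c.val.1 t) ∧
    (∀ t, (T c).val.2 t =
      if t = v + (f (fun u => c.val.1 (u + v)) q).2.2
      then some (f (fun u => c.val.1 (u + v)) q).2.1 else none))

/-- A moving-head `(1,n,k)`-Turing machine. -/
def IsTM1 {n k : ℕ} (T : X1 n k → X1 n k) : Prop :=
  ∃ F F' f, DefinedBy1 F F' f T

/-- A reversible Turing machine: a Turing machine admitting a Turing machine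
inverse. -/
def IsRTM1 {n k : ℕ} (T : X1 n k → X1 n k) : Prop :=
  IsTM1 T ∧ ∃ S : X1 n k → X1 n k, IsTM1 S ∧ S ∘ T = id ∧ T ∘ S = id

/-- A (finitely encodable) local rule for a one-dimensional finite-state machine:
a radius `rad` and, for each tape pattern on the window `[-rad, rad]` (indexed by
`Fin (2·rad+1)`, offset `i ↦ i - rad`) and each state, a new state and a movement. -/
structure FARule (n k : ℕ) where
  rad : ℕ
  next : (Fin (2 * rad + 1) → Fin n) → Fin k → Fin k × ℤ

/-- Local rules are finite objects: they can be effectively encoded. -/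
instance FARule.encodable (n k : ℕ) : Encodable (FARule n k) := by
  haveI : ∀ r : ℕ, Encodable ((Fin (2 * r + 1) → Fin n) → Fin k → Fin k × ℤ) := fun r =>
    haveI : Encodable (Fin k → Fin k × ℤ) := Encodable.fintypeArrowOfEncodable
    Encodable.fintypeArrowOfEncodable
  exact Encodable.ofEquiv (Σ r : ℕ, ((Fin (2 * r + 1) → Fin n) → Fin k → Fin k × ℤ))
    ⟨fun R => ⟨R.rad, R.next⟩, fun p => ⟨p.1, p.2⟩, fun _ => rfl, fun _ => rfl⟩

/-- `T` is the finite-state machine defined by the rule `R`: the tape is never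
changed, and a head at `v` in state `q` reading the window `[v-rad, v+rad]` moves
and changes its state according to `R`. -/
def FAApplies {n k : ℕ} (R : FARule n k) (T : X1 n k → X1 n k) : Prop :=
  (∀ c : X1 n k, (∀ v, c.val.2 v = none) → T c = c) ∧
  ∀ (c : X1 n k) (v : ℤ) (q : Fin k), c.val.2 v = some q →
    (T c).val.1 = c.val.1 ∧
    ∀ t, (T c).val.2 t =
      if t = v + (R.next (fun i => c.val.1 (v + (i : ℤ) - (R.rad : ℤ))) q).2
      then some (R.next (fun i => c.val.1 (v + (i : ℤ) - (R.rad : ℤ))) q).1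
      else none

/-!
A finite-state machine cannot change the tape, so on a fixed tape it is a deterministic walk
`ℤ × Q → ℤ × Q`. What lies to the left of a cell `b` influences the walk to the right of `b` only
through finitely many data: the tape on a window around `b`, the relation between the heads that
enter the left half-line and those in which they leave it again, and the heads in which the
initial head can leave it (Shepherdson's reduction of two-way to one-way automata). If a walk
travels further to the right than there are such data, two cells carry the same data, and
repeating the stretch of tape between them gives a tape on which the walk is unbounded, so the
machine has infinite order. Hence the walks of a machine of finite order have computably bounded
length, its order divides an explicit factorial `B`, and it suffices to run the machine for `B`
steps on all tapes of an explicit finite length.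
-/

namespace FiniteStateMachine

section Dynamics

variable {A Q : Type*}

/-- The head `a`, at position `a.1` in state `a.2`, moved by `s` cells. -/
def translate (s : ℤ) (a : ℤ × Q) : ℤ × Q := (a.1 + s, a.2)

@[simp]
lemma translate_fst (s : ℤ) (a : ℤ × Q) : (translate s a).1 = a.1 + s := rfl

@[simp]
lemma translate_zero (a : ℤ × Q) : translate 0 a = a := by simp [translate]

lemma translate_translate (s t : ℤ) (a : ℤ × Q) :
    translate s (translate t a) = translate (t + s) a := by
  simp [translate, add_assoc]

/-- A tape-dependent walk `S` of a head is local with radius `ρ` if it commutes with simultaneous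
translations of head and tape, depends only on the tape at distance at most `ρ` from the head
(both are expressed by `apply_translate`), and moves the head by at most `ρ`. -/
structure IsLocal (S : (ℤ → A) → ℤ × Q → ℤ × Q) (ρ : ℕ) : Prop where
  apply_translate : ∀ {x y : ℤ → A} {s : ℤ} {a : ℤ × Q},
    (∀ u, |u - a.1| ≤ ρ → y (u + s) = x u) → S y (translate s a) = translate s (S x a)
  abs_sub_le : ∀ x a, |(S x a).1 - a.1| ≤ ρ

/-- The walk `S` is periodic, with a common period for all tapes and all heads. -/
def IsTorsion (S : (ℤ → A) → ℤ × Q → ℤ × Q) : Prop :=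
  ∃ m : ℕ, 0 < m ∧ ∀ x, (S x)^[m] = id

/-- `FirstExit f b a c`: the orbit of the head `a` under `f` enters `[b, ∞)`, and `c` is its first
point there. -/
inductive FirstExit (f : ℤ × Q → ℤ × Q) (b : ℤ) : ℤ × Q → ℤ × Q → Prop
  | refl {a : ℤ × Q} (ha : b ≤ a.1) : FirstExit f b a a
  | head {a c : ℤ × Q} (ha : a.1 < b) (h : FirstExit f b (f a) c) : FirstExit f b a c

namespace FirstExit

variable {f : ℤ × Q → ℤ × Q} {b b' : ℤ} {a c d : ℤ × Q}

lemma le_fst (h : FirstExit f b a c) : b ≤ c.1 := by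
  induction h with
  | refl ha => exact ha
  | head _ _ ih => exact ih

lemma exists_iterate_eq (h : FirstExit f b a c) : ∃ t : ℕ, f^[t] a = c := by
  induction h with
  | refl _ => exact ⟨0, rfl⟩
  | head _ _ ih =>
    obtain ⟨t, ht⟩ := ih
    exact ⟨t + 1, ht⟩

lemma trans (hb : b ≤ b') (h : FirstExit f b a c) (h' : FirstExit f b' c d) :
    FirstExit f b' a d := by
  induction h with
  | refl _ => exact h'
  | head ha _ ih => exact .head (by lia) (ih h')

lemma exists_of_le_iterate (t : ℕ) (h : b ≤ (f^[t] a).1) : ∃ c, FirstExit f b a c := by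
  induction t generalizing a with
  | zero => exact ⟨a, .refl h⟩
  | succ t ih =>
    rcases le_or_gt b a.1 with hb | hb
    · exact ⟨a, .refl hb⟩
    · obtain ⟨c, hc⟩ := ih h
      exact ⟨c, .head hb hc⟩

end FirstExit

variable {S : (ℤ → A) → ℤ × Q → ℤ × Q} {ρ : ℕ}

namespace IsLocal

lemma apply_congr (hS : IsLocal S ρ) {x y : ℤ → A} {a : ℤ × Q}
    (hxy : ∀ u, |u - a.1| ≤ ρ → y u = x u) : S y a = S x a := by
  simpa using hS.apply_translate (s := 0) (by simpa using hxy)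

lemma iterate (hS : IsLocal S ρ) (t : ℕ) : IsLocal (fun x ↦ (S x)^[t]) (ρ * t) := by
  induction t with
  | zero => exact ⟨fun _ ↦ rfl, by simp⟩
  | succ t ih =>
    refine ⟨fun {x y s a} hxy ↦ ?_, fun x a ↦ ?_⟩ <;>
      have hmove := ih.abs_sub_le x a <;> rw [abs_le] at hmove
    · simp only [iterate_succ_apply']
      rw [ih.apply_translate fun u hu ↦ hxy u (hu.trans (by gcongr; lia))]
      refine hS.apply_translate fun u hu ↦ hxy u ?_
      rw [abs_le] at hu ⊢
      push_cast [mul_add] at hmove ⊢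
      constructor <;> linarith
    · have hstep := abs_le.1 (hS.abs_sub_le x ((S x)^[t] a))
      simp only [iterate_succ_apply']
      rw [abs_le]
      push_cast [mul_add] at hmove ⊢
      constructor <;> linarith

end IsLocal

lemma FirstExit.fst_lt (hS : IsLocal S ρ) {x : ℤ → A} {b : ℤ} {a c : ℤ × Q}
    (h : FirstExit (S x) b a c) (ha : a.1 < b) : c.1 < b + ρ := by
  induction h with
  | refl _ => lia
  | @head a c _ h ih =>
    rcases lt_or_ge (S x a).1 b with hlt | hge
    · exact ih hlt
    · cases h with
      | refl _ =>
        have := abs_le.1 (hS.abs_sub_le x a)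
        lia
      | head hlt _ => lia

lemma FirstExit.congr (hS : IsLocal S ρ) {x y : ℤ → A} {b : ℤ} {a c : ℤ × Q}
    (hxy : ∀ u < b + ρ, y u = x u) (h : FirstExit (S x) b a c) : FirstExit (S y) b a c := by
  induction h with
  | refl ha => exact .refl ha
  | head ha _ ih =>
    refine .head ha ?_
    rwa [hS.apply_congr fun u hu ↦ hxy u (by rw [abs_le] at hu; lia)]

/-- The tape `y` at the cell `b + s` simulates the tape `x` at the cell `b`, as far as their left
half-lines can be observed: the tapes agree near these cells, and every first exit that `x` allows
from the window left of `b`, or from the initial head `a₀`, is allowed by `y` as well. The head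
`a₀` is not translated. -/
structure LeftSimulates (S : (ℤ → A) → ℤ × Q → ℤ × Q) (ρ : ℕ) (a₀ : ℤ × Q)
    (x : ℤ → A) (b s : ℤ) (y : ℤ → A) : Prop where
  tape : ∀ u, b - ρ ≤ u → u < b + ρ → y (u + s) = x u
  exit : ∀ a c : ℤ × Q, b - ρ ≤ a.1 → a.1 < b → FirstExit (S x) b a c →
    FirstExit (S y) (b + s) (translate s a) (translate s c)
  start : ∀ c, FirstExit (S x) b a₀ c → FirstExit (S y) (b + s) a₀ (translate s c)

namespace LeftSimulates

variable {a₀ : ℤ × Q} {x y z : ℤ → A} {b s s' : ℤ}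

lemma of_eq_left (hS : IsLocal S ρ) (hxy : ∀ u < b + ρ, y u = x u) :
    LeftSimulates S ρ a₀ x b 0 y where
  tape u _ hu := by simpa using hxy u hu
  exit a c _ _ h := by simpa using h.congr hS hxy
  start c h := by simpa using h.congr hS hxy

lemma trans (hxy : LeftSimulates S ρ a₀ x b s y) (hyz : LeftSimulates S ρ a₀ y (b + s) s' z) :
    LeftSimulates S ρ a₀ x b (s + s') z where
  tape u h₁ h₂ := by
    rw [← hxy.tape u h₁ h₂, ← hyz.tape (u + s) (by lia) (by lia), add_assoc]
  exit a c h₁ h₂ h := by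
    have := hyz.exit _ _ (by rw [translate_fst]; lia) (by simpa using h₂) (hxy.exit a c h₁ h₂ h)
    rwa [translate_translate, translate_translate, add_assoc] at this
  start c h := by
    have := hyz.start _ (hxy.start c h)
    rwa [translate_translate, add_assoc] at this

/-- A walk to `b + 1` first exits at `b`. From there on it can be followed on `y`: at `b` both
tapes look alike, and each excursion to the left of `b` is an exit that `y` allows. -/
lemma exists_firstExit (hS : IsLocal S ρ) (h : LeftSimulates S ρ a₀ x b s y)
    (hnext : y (b + ρ + s) = x (b + ρ)) {a d : ℤ × Q} (had : FirstExit (S x) (b + 1) a d) :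
    ∃ c, FirstExit (S x) b a c ∧
      FirstExit (S y) (b + 1 + s) (translate s c) (translate s d) := by
  induction had with
  | refl ha => exact ⟨_, .refl (by lia), .refl (by rw [translate_fst]; lia)⟩
  | @head a d ha _ ih =>
    obtain ⟨c, hac, hcd⟩ := ih
    rcases lt_or_ge a.1 b with hab | hab
    · exact ⟨c, .head hab hac, hcd⟩
    obtain hab : a.1 = b := by lia
    have hstep : S y (translate s a) = translate s (S x a) := by
      refine hS.apply_translate fun u hu ↦ ?_
      rw [abs_le] at hu
      rcases (show u ≤ b + ρ by lia).lt_or_eq with hu' | rfl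
      · exact h.tape u (by lia) hu'
      · exact hnext
    refine ⟨a, .refl hab.ge, .head (by rw [translate_fst]; lia) (hstep ▸ ?_)⟩
    rcases lt_or_ge (S x a).1 b with hlt | hge
    · have := abs_le.1 (hS.abs_sub_le x a)
      exact (h.exit _ _ (by lia) hlt hac).trans (by lia) hcd
    · cases hac with
      | refl _ => exact hcd
      | head hlt _ => lia

lemma succ (hS : IsLocal S ρ) (h : LeftSimulates S ρ a₀ x b s y)
    (hnext : y (b + ρ + s) = x (b + ρ)) : LeftSimulates S ρ a₀ x (b + 1) s y where
  tape u h₁ h₂ := by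
    rcases (show u ≤ b + ρ by lia).lt_or_eq with hu | rfl
    · exact h.tape u (by lia) hu
    · exact hnext
  exit a d h₁ h₂ had := by
    obtain ⟨c, hac, hcd⟩ := h.exists_firstExit hS hnext had
    rcases lt_or_ge a.1 b with hab | hab
    · exact (h.exit a c (by lia) hab hac).trans (by lia) hcd
    · cases hac with
      | refl _ => exact hcd
      | head hlt _ => lia
  start d had := by
    obtain ⟨c, hac, hcd⟩ := h.exists_firstExit hS hnext had
    exact (h.start c hac).trans (by lia) hcd

end LeftSimulates

/-- The tape that agrees with `x` to the left of `b + s` and repeats `x` on `[b, b + s)` from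
there on. -/
def pumpedTape (x : ℤ → A) (b s : ℤ) : ℤ → A := fun v ↦ if v < b then x v else x (b + (v - b) % s)

lemma pumpedTape_apply_add (x : ℤ → A) (b : ℤ) {s i : ℕ} (hi : i < s) (j : ℕ) :
    pumpedTape x b s (b + i + j * s) = x (b + i) := by
  have hmod : ((i : ℤ) + j * s) % s = i := by
    rw [Int.add_mul_emod_self_right, Int.emod_eq_of_lt (by lia) (by lia)]
  have : (0 : ℤ) ≤ j * s := by positivity
  rw [pumpedTape, if_neg (by lia), add_assoc, add_sub_cancel_left, hmod]

/-- Within one copy of the repeated stretch the simulation advances cell by cell, and `h` carries it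
from the end of the stretch back to its beginning, where the next copy starts. -/
lemma LeftSimulates.pump (hS : IsLocal S ρ) {a₀ : ℤ × Q} {x : ℤ → A} {b : ℤ} {s : ℕ}
    (h : LeftSimulates S ρ a₀ x b s x) (j : ℕ) :
    LeftSimulates S ρ a₀ x b (j * s) (pumpedTape x (b + ρ) s) := by
  have hcopy (j : ℕ) (h₀ : LeftSimulates S ρ a₀ x b (j * s) (pumpedTape x (b + ρ) s)) (i : ℕ)
      (hi : i ≤ s) : LeftSimulates S ρ a₀ x (b + i) (j * s) (pumpedTape x (b + ρ) s) := by
    induction i with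
    | zero => simpa using h₀
    | succ i ih =>
      have hnext := pumpedTape_apply_add x (b + ρ) (s := s) (i := i) hi j
      rw [add_right_comm b] at hnext
      simpa [add_assoc] using (ih (by lia)).succ hS hnext
  induction j with
  | zero => simpa using of_eq_left (y := pumpedTape x (b + ρ) s) hS fun u hu ↦ if_pos hu
  | succ j ih => simpa [add_mul, add_comm] using h.trans (hcopy j ih s le_rfl)

lemma IsTorsion.exists_iterate_lt (hS : IsLocal S ρ) (h : IsTorsion S) (a : ℤ × Q) :
    ∃ M : ℤ, ∀ x t, ((S x)^[t] a).1 < M := by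
  obtain ⟨m, hm, hper⟩ := h
  refine ⟨a.1 + ρ * m + 1, fun x t ↦ ?_⟩
  have hfix : IsPeriodicPt (S x) m a := congrFun (hper x) a
  rw [← hfix.iterate_mod_apply]
  have hmove := abs_le.1 ((hS.iterate (t % m)).abs_sub_le x a)
  have : (ρ * (t % m) : ℕ) ≤ ρ * m := by gcongr; exact (Nat.mod_lt t hm).le
  push_cast at hmove
  zify at this
  lia

lemma LeftSimulates.not_isTorsion (hS : IsLocal S ρ) {a₀ c : ℤ × Q} {x : ℤ → A} {b : ℤ} {s : ℕ}
    (hs : 0 < s) (hc : FirstExit (S x) b a₀ c) (h : LeftSimulates S ρ a₀ x b s x) :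
    ¬ IsTorsion S := by
  intro htor
  obtain ⟨M, hM⟩ := htor.exists_iterate_lt hS a₀
  have hexit := (h.pump hS (M - b).toNat).start c hc
  obtain ⟨t, ht⟩ := hexit.exists_iterate_eq
  have hlt := hM (pumpedTape x (b + ρ) s) t
  rw [ht] at hlt
  have hle := hexit.le_fst
  have hfar : M - b ≤ (M - b).toNat * s :=
    (Int.self_le_toNat _).trans (le_mul_of_one_le_right (by positivity) (by exact_mod_cast hs))
  lia

/-- The finite set of possible data on the left half-line below a cell `b`: the tape on
`[b - ρ, b + ρ)`, the exit relation from `[b - ρ, b)` to `[b, b + ρ)`, and the possible exits of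
the initial head to `[b, b + ρ)`, with positions taken relative to `b`. -/
abbrev LeftType (A Q : Type*) (ρ : ℕ) : Type _ :=
  (Set.Ico (-ρ : ℤ) ρ → A) × Set ((Set.Ico (-ρ : ℤ) 0 × Q) × (Set.Ico (0 : ℤ) ρ × Q)) ×
    Set (Set.Ico (0 : ℤ) ρ × Q)

/-- The data that the tape `x` has on the left half-line below `b`. -/
def leftType (S : (ℤ → A) → ℤ × Q → ℤ × Q) (ρ : ℕ) (a₀ : ℤ × Q) (x : ℤ → A) (b : ℤ) :
    LeftType A Q ρ :=
  (fun u ↦ x (u + b),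
    {p | FirstExit (S x) b (translate b (p.1.1, p.1.2)) (translate b (p.2.1, p.2.2))},
    {p | FirstExit (S x) b a₀ (translate b (p.1, p.2))})

lemma LeftSimulates.of_leftType_eq (hS : IsLocal S ρ) {a₀ : ℤ × Q} {x y : ℤ → A} {b s : ℤ}
    (hab : a₀.1 < b) (h : leftType S ρ a₀ x b = leftType S ρ a₀ y (b + s)) :
    LeftSimulates S ρ a₀ x b s y := by
  simp only [leftType, Prod.mk.injEq, funext_iff, Set.ext_iff, Set.mem_ofPred_eq, Prod.forall,
    Subtype.forall, Set.mem_Ico] at h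
  obtain ⟨htape, hexit, hstart⟩ := h
  have htranslate (r : ℤ) (q : Q) : translate s (r, q) = translate (b + s) (r - b, q) := by
    simp only [translate, Prod.mk.injEq, and_true]
    ring
  have hcenter (r : ℤ) (q : Q) : (r, q) = translate b (r - b, q) := by simp [translate]
  refine ⟨fun u h₁ h₂ ↦ ?_, fun ⟨r, q⟩ ⟨r', q'⟩ h₁ h₂ h ↦ ?_, fun ⟨r, q⟩ h ↦ ?_⟩
  · have := htape (u - b) ⟨by lia, by lia⟩
    rw [sub_add_cancel] at this
    rw [this]
    congr 1
    ring
  · have hlt := h.fst_lt hS h₂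
    have hle := h.le_fst
    rw [htranslate, htranslate]
    refine (hexit _ ⟨?_, ?_⟩ q _ ⟨?_, ?_⟩ q').1 ?_
    any_goals lia
    rwa [← hcenter, ← hcenter]
  · have hlt := h.fst_lt hS hab
    have hle := h.le_fst
    rw [htranslate]
    refine (hstart _ ⟨?_, ?_⟩ q).1 ?_
    any_goals lia
    rwa [← hcenter]

/-- The number of left types for an alphabet with `n` letters and a machine with `k` states. -/
def leftTypeCount (n k ρ : ℕ) : ℕ := n ^ (2 * ρ) * (2 ^ (ρ * k * (ρ * k)) * 2 ^ (ρ * k))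

lemma card_leftType [Fintype A] [Fintype Q] :
    Fintype.card (LeftType A Q ρ) = leftTypeCount (Fintype.card A) (Fintype.card Q) ρ := by
  have : ((ρ : ℤ) + ρ).toNat = ρ + ρ := by lia
  simp [leftTypeCount, two_mul, this]

lemma IsTorsion.iterate_fst_le [Fintype A] [Fintype Q] (hS : IsLocal S ρ) (h : IsTorsion S)
    (x : ℤ → A) (a : ℤ × Q) (t : ℕ) :
    ((S x)^[t] a).1 ≤ a.1 + leftTypeCount (Fintype.card A) (Fintype.card Q) ρ := by
  by_contra! hfar
  obtain ⟨⟨i, hi⟩, ⟨j, hj⟩, hij, heq⟩ := Fintype.exists_ne_map_eq_of_card_lt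
    (fun i : Fin (leftTypeCount (Fintype.card A) (Fintype.card Q) ρ + 1) ↦
      leftType S ρ a x (a.1 + 1 + (i : ℕ))) (by
        rw [card_leftType, Fintype.card_fin]
        exact Nat.lt_succ_self _)
  simp only [ne_eq, Fin.mk.injEq] at hij heq
  wlog hlt : i < j generalizing i j
  · exact this j hj i hi heq.symm (Ne.symm hij) (by lia)
  obtain ⟨c, hc⟩ := FirstExit.exists_of_le_iterate (f := S x) (b := a.1 + 1 + i) (a := a) t (by lia)
  have hsim : LeftSimulates S ρ a x (a.1 + 1 + i) (j - i : ℕ) x := by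
    refine .of_leftType_eq hS (by lia) (heq.trans ?_)
    congr 1
    lia
  exact hsim.not_isTorsion hS (by lia) hc h

lemma minimalPeriod_le_card_of_forall_iterate_mem {α : Type*} {f : α → α} {a : α} {s : Finset α}
    (h : ∀ t, f^[t] a ∈ s) : minimalPeriod f a ≤ s.card := by
  simpa using Finset.card_le_card_of_injOn (s := Finset.range (minimalPeriod f a))
    (f^[·] a) (fun t _ ↦ h t) (by simpa using iterate_injOn_Iio_minimalPeriod)

/-- A multiple of the period of every torsion walk that is local with radius `ρ`. All orbits of
such a walk stay within distance `leftTypeCount n k ρ` of their initial head. -/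
def torsionExponent (n k ρ : ℕ) : ℕ := ((2 * leftTypeCount n k ρ + 1) * k).factorial

theorem isTorsion_iff_iterate_torsionExponent [Fintype A] [Fintype Q] (hS : IsLocal S ρ) :
    IsTorsion S ↔
      ∀ x a, (S x)^[torsionExponent (Fintype.card A) (Fintype.card Q) ρ] a = a := by
  refine ⟨fun h x a ↦ ?_, fun h ↦ ⟨_, Nat.factorial_pos _, fun x ↦ funext (h x)⟩⟩
  obtain ⟨m, hm, hper⟩ := id h
  have hfix : IsPeriodicPt (S x) m a := congrFun (hper x) a
  set C := leftTypeCount (Fintype.card A) (Fintype.card Q) ρ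
  have horbit (t : ℕ) :
      (S x)^[t] a ∈ Finset.Icc (a.1 - C) (a.1 + C) ×ˢ (Finset.univ : Finset Q) := by
    -- The walk returns to `a`, so the bound to the right also bounds it to the left.
    have hright := h.iterate_fst_le hS x a t
    have hleft := h.iterate_fst_le hS x ((S x)^[t] a) (m * t - t)
    rw [← iterate_add_apply, Nat.sub_add_cancel (Nat.le_mul_of_pos_left t hm),
      (hfix.mul_const t).eq] at hleft
    simp only [Finset.mem_product, Finset.mem_Icc, Finset.mem_univ, and_true]
    lia
  have hle := minimalPeriod_le_card_of_forall_iterate_mem horbit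
  have hcard : (Finset.Icc (a.1 - C) (a.1 + C) ×ˢ (Finset.univ : Finset Q)).card =
      (2 * C + 1) * Fintype.card Q := by
    rw [Finset.card_product, Int.card_Icc, Finset.card_univ]
    congr 1
    lia
  exact (isPeriodicPt_minimalPeriod (S x) a).trans_dvd
    (Nat.dvd_factorial (hfix.minimalPeriod_pos hm) (hcard ▸ hle))

end Dynamics

section Codes

open Encodable

lemma encode_list_map {β : Type*} [Encodable β] (l : List β) :
    encode (l.map encode) = encode l := by
  induction l with
  | nil => rfl
  | cons a l ih => simp [ih]

lemma encode_finArrow {β : Type*} [Encodable β] {m : ℕ} (f : Fin m → β) :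
    @encode _ finArrow f = encode (List.ofFn fun i ↦ encode (f i)) := by
  have hofFn : @encode _ finArrow f = encode (List.Vector.ofFn f).toList := rfl
  rw [hofFn, List.Vector.toList_ofFn, ← encode_list_map, List.map_ofFn]
  rfl

lemma encode_finPi {β : Type*} [Encodable β] {m : ℕ} (f : Fin m → β) :
    @encode _ (finPi m fun _ ↦ β) f =
      encode (List.ofFn fun i : Fin m ↦ Nat.pair i (encode (f i))) :=
  encode_finArrow fun i ↦ (⟨i, f i⟩ : Σ _ : Fin m, β)

section Arrow

variable {α : Type*} [Encodable α] [Fintype α]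

/-- The code of the value table of `f`, listed in increasing order of the codes of the
arguments. -/
def arrowCode (f : α → ℕ) : ℕ :=
  encode (List.ofFn fun i : Fin (Fintype.card α) ↦ Nat.pair i (f (fintypeEquivFin.symm i)))

lemma encode_fintypeArrow {β : Type*} [Encodable β] (f : α → β) :
    @encode _ fintypeArrowOfEncodable f = arrowCode fun a ↦ encode (f a) :=
  encode_finPi fun i : Fin (Fintype.card α) ↦ f (fintypeEquivFin.symm i)

/-- The value at the `i`-th argument of the function with value table coded by `c`. -/
def arrowApply (c i : ℕ) : ℕ := ((Denumerable.ofNat (List ℕ) c).getD i 0).unpair.2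

lemma arrowApply_arrowCode (f : α → ℕ) (a : α) :
    arrowApply (arrowCode f) (fintypeEquivFin a) = f a := by
  simp [arrowApply, arrowCode, List.getD_eq_getElem?_getD]

lemma le_encode_of_mem {a : ℕ} {l : List ℕ} (ha : a ∈ l) : a ≤ encode l := by
  induction ha with
  | head l => exact (Nat.left_le_pair a (encode l)).trans (Nat.le_succ _)
  | tail b _ ih => exact (ih.trans (Nat.right_le_pair _ _)).trans (Nat.le_succ _)

lemma le_arrowCode (f : α → ℕ) (a : α) : f a ≤ arrowCode f := by
  refine (Nat.right_le_pair (fintypeEquivFin a) (f a)).trans (le_encode_of_mem ?_)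
  exact List.mem_ofFn.2 ⟨fintypeEquivFin a, by simp⟩

lemma strictMono_encode_fintypeEquivFin_symm :
    StrictMono fun i : Fin (Fintype.card α) ↦ encode (fintypeEquivFin.symm i : α) := by
  have hget (i : Fin (Fintype.card α)) : (fintypeEquivFin.symm i : α) =
      (sortedUniv α).get (i.cast (length_sortedUniv α).symm) := by
    rw [fintypeEquivFin, Equiv.symm_trans_apply, ← finCongr_eq_equivCast (length_sortedUniv α)]
    rfl
  intro i j hij
  simp only [hget]
  have hle := List.pairwise_iff_get.1
    (Finset.pairwise_sort Finset.univ (Encodable.encode' α ⁻¹'o (· ≤ ·)))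
    (i.cast (length_sortedUniv α).symm) (j.cast (length_sortedUniv α).symm) hij
  refine lt_of_le_of_ne hle fun heq ↦ hij.ne ?_
  simpa [Fin.ext_iff] using
    List.nodup_iff_injective_get.1 (sortedUniv_nodup α) (encode_injective heq)

lemma fintypeEquivFin_val (a : α) :
    (fintypeEquivFin a : ℕ) = Finset.card {b : α | encode b < encode a} := by
  have hlt (b : α) : encode b < encode a ↔ fintypeEquivFin b < fintypeEquivFin a := by
    simpa using (strictMono_encode_fintypeEquivFin_symm (α := α)).lt_iff_lt
      (a := fintypeEquivFin b) (b := fintypeEquivFin a)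
  rw [← Fin.card_Iio]
  exact (Finset.card_equiv fintypeEquivFin (by simp [hlt])).symm

end Arrow

lemma encode_fin {k : ℕ} (q : Fin k) : encode q = q := rfl

lemma fintypeEquivFin_fin {k : ℕ} (q : Fin k) : (fintypeEquivFin q : ℕ) = q := by
  have : ({b : Fin k | encode b < encode q} : Finset (Fin k)) = Finset.Iio q := by
    ext
    simp [encode_fin]
  rw [fintypeEquivFin_val, this, Fin.card_Iio]

/-- The `i`-th digit of `w` in base `n`. -/
def digit (n w i : ℕ) : ℕ := w / n ^ i % n

lemma digit_finFunctionFinEquiv {m n : ℕ} (p : Fin m → Fin n) (i : Fin m) :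
    digit n (finFunctionFinEquiv p) i = p i := by
  rw [digit, ← finFunctionFinEquiv_symm_apply_val, Equiv.symm_apply_apply]

/-- The code of the word formed by the first `m` letters of `x`. -/
def wordCode (m : ℕ) (x : ℕ → ℕ) : ℕ := encode ((List.range m).map fun i ↦ Nat.pair i (x i))

lemma wordCode_eq_encode {m n : ℕ} {x : ℕ → ℕ} {p : Fin m → Fin n} (h : ∀ i : Fin m, x i = p i) :
    wordCode m x = encode p := by
  have hlist : (List.range m).map (fun i ↦ Nat.pair i (x i)) =
      List.ofFn fun i : Fin m ↦ Nat.pair i (encode (p i)) := by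
    refine List.ext_getElem (by simp) fun i hi _ ↦ ?_
    have : x i = p ⟨i, _⟩ := h ⟨i, by simpa using hi⟩
    simp [encode_fin, this]
  rw [wordCode, hlist]
  exact (encode_finPi p).symm

/-- The number of words of length `m` over an alphabet with `n` letters whose code is below `c`. -/
def wordRank (n m c : ℕ) : ℕ := Nat.count (fun w ↦ wordCode m (digit n w) < c) (n ^ m)

lemma wordRank_encode {m n : ℕ} (p : Fin m → Fin n) :
    wordRank n m (encode p) = fintypeEquivFin p := by
  rw [wordRank, Nat.count_eq_card_filter_range, fintypeEquivFin_val]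
  symm
  refine Finset.card_bij (fun p' _ ↦ (finFunctionFinEquiv p' : ℕ)) (fun p' hp' ↦ ?_)
    (fun p₁ _ p₂ _ h ↦ finFunctionFinEquiv.injective (Fin.ext h)) fun w hw ↦ ?_
  · rw [Finset.mem_filter, Finset.mem_range, wordCode_eq_encode (digit_finFunctionFinEquiv p')]
    exact ⟨(finFunctionFinEquiv p').isLt, by simpa using hp'⟩
  · obtain ⟨hw, hlt⟩ := by simpa using hw
    obtain ⟨p', hp'⟩ := finFunctionFinEquiv.surjective (⟨w, hw⟩ : Fin (n ^ m))
    have hval : (finFunctionFinEquiv p' : ℕ) = w := by rw [hp']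
    refine ⟨p', ?_, hval⟩
    rw [← hval, wordCode_eq_encode (digit_finFunctionFinEquiv p')] at hlt
    simpa using hlt

/-- The position `v + z`, where `z` is given by its code. Positions are truncated at `0`. -/
def moveBy (v c : ℕ) : ℕ := if c % 2 = 0 then v + c / 2 else v - (c / 2 + 1)

lemma moveBy_encode {v : ℕ} {z : ℤ} (h : 0 ≤ v + z) : (moveBy v (encode z) : ℤ) = v + z := by
  rcases z with m | m
  · have hcode : encode (Int.ofNat m) = 2 * m := rfl
    rw [hcode, moveBy, if_pos (by lia)]
    simp
  · have hcode : encode (Int.negSucc m) = 2 * m + 1 := rfl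
    rw [hcode, moveBy, if_neg (by lia)]
    lia

lemma abs_le_encode (z : ℤ) : |z| ≤ (encode z : ℤ) := by
  rcases z with m | m
  · have hcode : encode (Int.ofNat m) = 2 * m := rfl
    rw [hcode, abs_le, Int.ofNat_eq_natCast]
    lia
  · have hcode : encode (Int.negSucc m) = 2 * m + 1 := rfl
    rw [hcode, abs_le]
    lia

end Codes

section Rules

open Encodable

variable {n k : ℕ}

lemma encode_rule (R : FARule n k) :
    encode R = Nat.pair R.rad (arrowCode fun p ↦ arrowCode fun q ↦ encode (R.next p q)) := by
  let : Encodable (Fin k → Fin k × ℤ) := fintypeArrowOfEncodable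
  have hpair : encode R = Nat.pair R.rad (@encode _ fintypeArrowOfEncodable R.next) := rfl
  rw [hpair, encode_fintypeArrow]
  simp_rw [encode_fintypeArrow]

lemma rad_le_encode (R : FARule n k) : R.rad ≤ encode R := by
  rw [encode_rule]
  exact Nat.left_le_pair _ _

lemma abs_move_le_encode (R : FARule n k) (p : Fin (2 * R.rad + 1) → Fin n) (q : Fin k) :
    |(R.next p q).2| ≤ (encode R : ℤ) := by
  refine (abs_le_encode _).trans (Int.ofNat_le.2 ?_)
  calc encode (R.next p q).2
    _ ≤ encode (R.next p q) := Nat.right_le_pair _ _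
    _ ≤ arrowCode fun q ↦ encode (R.next p q) := le_arrowCode (fun q ↦ encode (R.next p q)) q
    _ ≤ arrowCode fun p ↦ arrowCode fun q ↦ encode (R.next p q) :=
      le_arrowCode (fun p ↦ arrowCode fun q ↦ encode (R.next p q)) p
    _ ≤ encode R := encode_rule R ▸ Nat.right_le_pair _ _

/-- The value, as a code, that the rule with code `e` takes on the window with letters `x` and
the state `q`. -/
def ruleValue (n e : ℕ) (x : ℕ → ℕ) (q : ℕ) : ℕ :=
  arrowApply (arrowApply e.unpair.2 (wordRank n (2 * e.unpair.1 + 1)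
    (wordCode (2 * e.unpair.1 + 1) x))) q

lemma ruleValue_encode (R : FARule n k) {x : ℕ → ℕ} {p : Fin (2 * R.rad + 1) → Fin n}
    (h : ∀ i : Fin (2 * R.rad + 1), x i = p i) (q : Fin k) :
    ruleValue n (encode R) x q = encode (R.next p q) := by
  rw [ruleValue, encode_rule, Nat.unpair_pair, wordCode_eq_encode h, wordRank_encode,
    arrowApply_arrowCode, ← fintypeEquivFin_fin q, arrowApply_arrowCode]

end Rules

section Configurations

open Encodable

variable {n k : ℕ}

/-- The walk of the head under the rule `R` on a given tape. -/
def step (R : FARule n k) (x : ℤ → Fin n) (a : ℤ × Fin k) : ℤ × Fin k :=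
  let r := R.next (fun i ↦ x (a.1 + (i : ℤ) - (R.rad : ℤ))) a.2
  (a.1 + r.2, r.1)

lemma isLocal_step (R : FARule n k) : IsLocal (step R) (encode R) where
  apply_translate {x y s a} hxy := by
    have hrad := rad_le_encode R
    have hwindow (i : Fin (2 * R.rad + 1)) :
        y (a.1 + s + (i : ℤ) - (R.rad : ℤ)) = x (a.1 + (i : ℤ) - (R.rad : ℤ)) := by
      have hi := i.isLt
      rw [← hxy _ (abs_le.2 (by lia))]
      congr 1
      ring
    simp only [step, translate, hwindow, add_right_comm]
  abs_sub_le x a := by simpa [step] using abs_move_le_encode R _ a.2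

/-- The configuration with tape `x` and head `a`. -/
def conf (x : ℤ → Fin n) (a : ℤ × Fin k) : X1 n k :=
  ⟨(x, fun t ↦ if t = a.1 then some a.2 else none), fun u v hu hv ↦ by
    simp only [Option.isSome_ite] at hu hv
    rw [hu, hv]⟩

lemma conf_injective (x : ℤ → Fin n) : Injective (conf (k := k) x) := by
  intro a b hab
  have hhead : (conf x a).val.2 a.1 = (conf x b).val.2 a.1 := by rw [hab]
  by_cases h : a.1 = b.1
  · exact Prod.ext h (by simpa [conf, h] using hhead)
  · simp [conf, h] at hhead

lemma eq_conf_of_eq_some {c : X1 n k} {v : ℤ} {q : Fin k} (h : c.val.2 v = some q) :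
    c = conf c.val.1 (v, q) := by
  refine Subtype.ext (Prod.ext rfl (funext fun t ↦ ?_))
  by_cases ht : t = v
  · simp [conf, ht, h]
  · have : ¬ (c.val.2 t).isSome := fun hsome ↦ ht (c.2 t v hsome (by simp [h]))
    simpa [conf, ht] using this

variable {R : FARule n k} {T : X1 n k → X1 n k}

lemma semiconj_conf (hT : FAApplies R T) (x : ℤ → Fin n) :
    Semiconj (conf x) (step R x) T := by
  intro a
  obtain ⟨htape, hhead⟩ := hT.2 (conf x a) a.1 a.2 (by simp [conf])
  exact Subtype.ext (Prod.ext htape.symm (funext fun t ↦ (hhead t).symm))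

lemma exists_iterate_eq_id_iff_isTorsion (hT : FAApplies R T) :
    (∃ m : ℕ, 0 < m ∧ T^[m] = id) ↔ IsTorsion (step R) := by
  refine exists_congr fun m ↦ and_congr_right fun _ ↦ ⟨fun h x ↦ ?_, fun h ↦ ?_⟩
  · refine funext fun a ↦ conf_injective x ?_
    rw [((semiconj_conf hT x).iterate_right m).eq, h, id, id]
  · funext c
    by_cases hc : ∀ v, c.val.2 v = none
    · exact iterate_fixed (hT.1 c hc) m
    · obtain ⟨v, hv⟩ := not_forall.1 hc
      obtain ⟨q, hq⟩ := Option.ne_none_iff_exists'.1 hv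
      rw [eq_conf_of_eq_some hq, ← ((semiconj_conf hT _).iterate_right m).eq, h, id, id]

end Configurations

section Simulation

open Encodable

variable {n k : ℕ}

/-- The tape whose cells `0, 1, 2, …` carry the digits of `w` in base `n`. The cells to
the left of `0` repeat the cell `0`. -/
def digitTape (n : ℕ) [NeZero n] (w : ℕ) (u : ℤ) : Fin n :=
  ⟨digit n w u.toNat, Nat.mod_lt _ (NeZero.pos n)⟩

lemma exists_digitTape_eq [NeZero n] (N : ℕ) (x : ℤ → Fin n) :
    ∃ w < n ^ N, ∀ u : ℤ, 0 ≤ u → u < N → digitTape n w u = x u := by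
  let p : Fin N → Fin n := fun i ↦ x i
  refine ⟨finFunctionFinEquiv p, (finFunctionFinEquiv p).isLt, fun u h₀ hN ↦ Fin.ext ?_⟩
  lift u to ℕ using h₀
  exact digit_finFunctionFinEquiv p ⟨u, by exact_mod_cast hN⟩

lemma IsLocal.forall_apply_eq_iff [NeZero n] {Q : Type*} {S : (ℤ → Fin n) → ℤ × Q → ℤ × Q} {ρ : ℕ}
    (hS : IsLocal S ρ) : (∀ x a, S x a = a) ↔
      ∀ w < n ^ (2 * ρ + 1), ∀ q, S (digitTape n w) ((ρ : ℤ), q) = ((ρ : ℤ), q) := by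
  refine ⟨fun h w _ q ↦ h _ _, fun h x a ↦ ?_⟩
  obtain ⟨w, hw, hwx⟩ := exists_digitTape_eq (2 * ρ + 1) fun u ↦ x (u + (a.1 - ρ))
  have ha : translate (a.1 - ρ) ((ρ : ℤ), a.2) = a := by simp [translate]
  have happly := hS.apply_translate (x := digitTape n w) (y := x) (s := a.1 - ρ)
    (a := ((ρ : ℤ), a.2)) fun u hu ↦ by
      rw [abs_le] at hu
      exact (hwx u (by lia) (by lia)).symm
  rwa [h w hw, ha] at happly

/-- One step of the walk of the rule with code `e` on the tape `digitTape n w`, in terms of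
natural numbers. It is meaningful only at positions `≥ e`, where the window and the move do not
reach below the cell `0`. -/
def simStep (n e w : ℕ) (a : ℕ × ℕ) : ℕ × ℕ :=
  let r := ruleValue n e (fun i ↦ digit n w (a.1 + i - e.unpair.1)) a.2
  (moveBy a.1 r.unpair.2, r.unpair.1)

/-- The head `a` in terms of natural numbers. Negative positions are sent to `0`. -/
def headCode (a : ℤ × Fin k) : ℕ × ℕ := (a.1.toNat, a.2)

lemma simStep_headCode [NeZero n] (R : FARule n k) (w : ℕ) {a : ℤ × Fin k}
    (ha : encode R ≤ a.1) :
    simStep n (encode R) w (headCode a) = headCode (step R (digitTape n w) a) := by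
  obtain ⟨v, q⟩ := a
  lift v to ℕ using by lia
  have hrad := rad_le_encode R
  have hunpair : (encode R).unpair.1 = R.rad := by rw [encode_rule, Nat.unpair_pair]
  set p : Fin (2 * R.rad + 1) → Fin n := fun i ↦ digitTape n w (v + (i : ℤ) - (R.rad : ℤ)) with hp
  have hvalue : ruleValue n (encode R) (fun i ↦ digit n w (v + i - R.rad)) q =
      Nat.pair (R.next p q).1 (encode (R.next p q).2) := by
    refine ruleValue_encode R (fun i ↦ ?_) q
    simp only [hp, digitTape]
    congr 1
    lia
  have hmove := abs_le.1 (abs_move_le_encode R p q)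
  have hpos := moveBy_encode (v := v) (z := (R.next p q).2) (by lia)
  simp only [simStep, headCode, step, hunpair, Int.toNat_natCast, hvalue, Nat.unpair_pair, ← hp,
    ← hpos]

lemma iterate_simStep [NeZero n] (R : FARule n k) (w : ℕ) (q : Fin k) {B t : ℕ} (ht : t ≤ B) :
    (simStep n (encode R) w)^[t] (encode R * B, q) =
      headCode ((step R (digitTape n w))^[t] ((encode R * B : ℕ), q)) := by
  induction t with
  | zero => rfl
  | succ t ih =>
    rw [iterate_succ_apply', iterate_succ_apply', ih (by lia),
      simStep_headCode]
    have hmove := abs_le.1 (((isLocal_step R).iterate t).abs_sub_le (digitTape n w)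
      ((encode R * B : ℕ), q))
    have hle : encode R * (t + 1) ≤ encode R * B := by gcongr
    zify at hle
    push_cast at hmove ⊢
    linarith

/-- The torsion test for the rule with code `e`: `torsionExponent n k e` steps of the walk fix the
head in the middle of every tape that is long enough for this computation. -/
def TorsionTest (n k e : ℕ) : Prop :=
  ∀ w < n ^ (2 * (e * torsionExponent n k e) + 1), ∀ q < k,
    (simStep n e w)^[torsionExponent n k e] (e * torsionExponent n k e, q) =
      (e * torsionExponent n k e, q)

lemma torsionTest_encode_iff [NeZero n] (R : FARule n k) :
    TorsionTest n k (encode R) ↔ IsTorsion (step R) := by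
  have hS := isLocal_step R
  have hword (w : ℕ) (q : Fin k) (B : ℕ) :
      (simStep n (encode R) w)^[B] (encode R * B, q) =
        (encode R * B, (q : ℕ)) ↔
      (step R (digitTape n w))^[B] ((encode R * B : ℕ), q) =
        (((encode R * B : ℕ) : ℤ), q) := by
    have hmove := abs_le.1 ((hS.iterate B).abs_sub_le (digitTape n w)
      ((encode R * B : ℕ), q))
    rw [iterate_simStep R w q le_rfl]
    simp only [headCode, Prod.ext_iff, Fin.ext_iff]
    lia
  rw [isTorsion_iff_iterate_torsionExponent hS, Fintype.card_fin, Fintype.card_fin,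
    (hS.iterate _).forall_apply_eq_iff]
  exact ⟨fun h w hw q ↦ (hword w q _).1 (h w hw q q.isLt),
    fun h w hw q hq ↦ (hword w ⟨q, hq⟩ _).2 (h w hw ⟨q, hq⟩)⟩

end Simulation

section PrimitiveRecursion

lemma primrec_pow : Primrec₂ fun a b : ℕ ↦ a ^ b :=
  Primrec₂.unpaired'.1 Nat.Primrec.pow

lemma primrec_factorial : Primrec Nat.factorial := by
  refine (Primrec.nat_rec₁ (f := fun i r ↦ (i + 1) * r) 1 ?_).of_eq fun m ↦ ?_
  · exact Primrec.nat_mul.comp (Primrec.succ.comp Primrec.fst) Primrec.snd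
  · induction m with
    | zero => rfl
    | succ m ih => rw [Nat.factorial_succ, ← ih]

lemma primrec_digit (n : ℕ) : Primrec₂ (digit n) :=
  Primrec.nat_mod.comp (Primrec.nat_div.comp Primrec.fst
    (primrec_pow.comp (Primrec.const n) Primrec.snd)) (Primrec.const n)

lemma primrec_arrowApply : Primrec₂ arrowApply :=
  Primrec.snd.comp (Primrec.unpair.comp ((Primrec.list_getD 0).comp
    ((Primrec.ofNat (List ℕ)).comp Primrec.fst) Primrec.snd))

lemma primrec_moveBy : Primrec₂ moveBy := by
  have hhalf : Primrec₂ fun _ c : ℕ ↦ c / 2 := Primrec.nat_div.comp Primrec.snd (Primrec.const 2)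
  refine Primrec.ite ?_ (Primrec.nat_add.comp Primrec.fst hhalf)
    (Primrec.nat_sub.comp Primrec.fst (Primrec.succ.comp hhalf))
  exact Primrec.eq.comp (Primrec.nat_mod.comp Primrec.snd (Primrec.const 2)) (Primrec.const 0)

variable {γ : Type*} [Primcodable γ]

lemma primrec_wordCode {m : γ → ℕ} {x : γ → ℕ → ℕ} (hm : Primrec m) (hx : Primrec₂ x) :
    Primrec fun c ↦ wordCode (m c) (x c) :=
  Primrec.encode.comp (Primrec.list_map (Primrec.list_range.comp hm)
    (Primrec₂.natPair.comp Primrec.snd hx))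

lemma primrec_wordRank (n : ℕ) : Primrec₂ (wordRank n) := by
  have hlt : PrimrecRel fun (w : ℕ) (p : ℕ × ℕ) ↦ wordCode p.1 (digit n w) < p.2 := by
    refine Primrec.nat_lt.comp (primrec_wordCode (Primrec.fst.comp Primrec.snd) ?_)
      (Primrec.snd.comp Primrec.snd)
    exact (primrec_digit n).comp (Primrec.fst.comp Primrec.fst) Primrec.snd
  have hwords : Primrec fun p : ℕ × ℕ ↦ List.range (n ^ p.1) :=
    Primrec.list_range.comp (primrec_pow.comp (Primrec.const n) Primrec.fst)
  refine (Primrec.list_length.comp (hlt.listFilter.comp hwords Primrec.id)).of_eq fun p ↦ ?_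
  rw [wordRank, Nat.count, List.countP_eq_length_filter]
  rfl

lemma primrec_ruleValue (n : ℕ) {e q : γ → ℕ} {x : γ → ℕ → ℕ} (he : Primrec e)
    (hx : Primrec₂ x) (hq : Primrec q) : Primrec fun c ↦ ruleValue n (e c) (x c) (q c) := by
  have hunpair := Primrec.unpair.comp he
  have hm : Primrec fun c ↦ 2 * (e c).unpair.1 + 1 :=
    Primrec.succ.comp (Primrec.nat_mul.comp (Primrec.const 2) (Primrec.fst.comp hunpair))
  exact primrec_arrowApply.comp (primrec_arrowApply.comp (Primrec.snd.comp hunpair)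
    ((primrec_wordRank n).comp hm (primrec_wordCode hm hx))) hq

lemma primrec_simStep (n : ℕ) :
    Primrec₂ fun (p : ℕ × ℕ) (a : ℕ × ℕ) ↦ simStep n p.1 p.2 a := by
  have hcell : Primrec₂ fun (c : (ℕ × ℕ) × (ℕ × ℕ)) (i : ℕ) ↦ c.2.1 + i - c.1.1.unpair.1 :=
    Primrec.nat_sub.comp
      (Primrec.nat_add.comp (Primrec.fst.comp (Primrec.snd.comp Primrec.fst)) Primrec.snd)
      (Primrec.fst.comp (Primrec.unpair.comp (Primrec.fst.comp (Primrec.fst.comp Primrec.fst))))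
  have hvalue : Primrec fun c : (ℕ × ℕ) × (ℕ × ℕ) ↦
      (ruleValue n c.1.1 (fun i ↦ digit n c.1.2 (c.2.1 + i - c.1.1.unpair.1)) c.2.2).unpair :=
    Primrec.unpair.comp (primrec_ruleValue n (Primrec.fst.comp Primrec.fst)
      ((primrec_digit n).comp (Primrec.snd.comp (Primrec.fst.comp Primrec.fst)) hcell)
      (Primrec.snd.comp Primrec.snd))
  exact Primrec.pair (primrec_moveBy.comp (Primrec.fst.comp Primrec.snd)
    (Primrec.snd.comp hvalue)) (Primrec.fst.comp hvalue)

lemma primrec_leftTypeCount (n k : ℕ) : Primrec (leftTypeCount n k) := by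
  have hρk : Primrec fun ρ : ℕ ↦ ρ * k := Primrec.nat_mul.comp Primrec.id (Primrec.const k)
  exact Primrec.nat_mul.comp
    (primrec_pow.comp (Primrec.const n) (Primrec.nat_mul.comp (Primrec.const 2) Primrec.id))
    (Primrec.nat_mul.comp (primrec_pow.comp (Primrec.const 2) (Primrec.nat_mul.comp hρk hρk))
      (primrec_pow.comp (Primrec.const 2) hρk))

lemma primrec_torsionExponent (n k : ℕ) : Primrec (torsionExponent n k) :=
  primrec_factorial.comp (Primrec.nat_mul.comp (Primrec.succ.comp
    (Primrec.nat_mul.comp (Primrec.const 2) (primrec_leftTypeCount n k))) (Primrec.const k))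

lemma primrecPred_torsionTest (n k : ℕ) : PrimrecPred (TorsionTest n k) := by
  have hB := primrec_torsionExponent n k
  have hL : Primrec fun e ↦ e * torsionExponent n k e := Primrec.nat_mul.comp Primrec.id hB
  have hfixed : PrimrecRel fun (q : ℕ) (p : ℕ × ℕ) ↦
      (simStep n p.1 p.2)^[torsionExponent n k p.1] (p.1 * torsionExponent n k p.1, q) =
        (p.1 * torsionExponent n k p.1, q) := by
    have hstart : Primrec fun c : ℕ × (ℕ × ℕ) ↦ (c.2.1 * torsionExponent n k c.2.1, c.1) :=
      Primrec.pair (hL.comp (Primrec.fst.comp Primrec.snd)) Primrec.fst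
    exact Primrec.eq.comp (Primrec.nat_iterate (hB.comp (Primrec.fst.comp Primrec.snd)) hstart
      ((primrec_simStep n).comp (Primrec.snd.comp Primrec.fst) Primrec.snd)) hstart
  have hstates : PrimrecRel fun w e : ℕ ↦ ∀ q < k,
      (simStep n e w)^[torsionExponent n k e] (e * torsionExponent n k e, q) =
        (e * torsionExponent n k e, q) :=
    (hfixed.forall_mem_list.comp (Primrec.const (List.range k))
      (Primrec.pair Primrec.snd Primrec.fst)).of_eq fun _ ↦ by simp
  have hwords : Primrec fun e ↦ n ^ (2 * (e * torsionExponent n k e) + 1) :=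
    primrec_pow.comp (Primrec.const n)
      (Primrec.succ.comp (Primrec.nat_mul.comp (Primrec.const 2) hL))
  exact hstates.forall_lt.comp hwords Primrec.id

end PrimitiveRecursion

end FiniteStateMachine

theorem rfa_torsion_decidable_general (n k : ℕ) (hn : 1 ≤ n) :
    ∃ g : ℕ → Bool, Primrec g ∧
      ∀ (R : FARule n k) (T : X1 n k → X1 n k),
        FAApplies R T →
        (g (Encodable.encode R) = true ↔ ∃ m : ℕ, 0 < m ∧ T^[m] = id) := by
  classical
  have : NeZero n := ⟨Nat.one_le_iff_ne_zero.1 hn⟩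
  refine ⟨fun e ↦ decide (FiniteStateMachine.TorsionTest n k e),
    (FiniteStateMachine.primrecPred_torsionTest n k).decide, fun R T hT ↦ ?_⟩
  rw [decide_eq_true_iff, FiniteStateMachine.torsionTest_encode_iff,
    FiniteStateMachine.exists_iterate_eq_id_iff_isTorsion hT]

/-- The torsion problem of `RFA(ℤ,n,k)` is decidable: there is an algorithm
(a computable function on encodings of local rules) which, given a local rule
defining a reversible finite-state machine, decides whether the machine has
finite order. -/
theorem rfa_torsion_decidable (n k : ℕ) (hn : 1 ≤ n) (hk : 1 ≤ k) :
    ∃ g : ℕ → Bool, Computable g ∧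
      ∀ (R : FARule n k) (T : X1 n k → X1 n k),
        FAApplies R T → IsRTM1 T →
        (g (Encodable.encode R) = true ↔ ∃ m : ℕ, 0 < m ∧ T^[m] = id) := by
  obtain ⟨g, hg, hgT⟩ := rfa_torsion_decidable_general n k hn
  exact ⟨g, hg.to_comp, fun R T hT _ ↦ hgT R T hT⟩
end
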